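/- Let g be a continuous complex-valued function on the closed unit disk, and let f ∈ C²(𝔻)∩C(𝕋) satisfy Δf = g on 𝔻, f(0) = 0, J_f(0) = 1, sup_{z∈𝔻}|g(z)| ≤ M₁ and sup_{z∈𝔻}|f(z)| ≤ M₂, where M₁ ≥ 0 and M₂ > 0 are constants. Let r₀ ∈ (0,1) be the solution of 1/((4/π)M₂ + (2/3)M₁) − (4M₂/π)·r₀(2−r₀)/(1−r₀)² − 2M₁·[log(4(1+r₀)) − log r₀]·(2+r₀)r₀ = 0. Then f is bi-Lipschitz on 𝔻_{r₀}: there is a constant L₁ > 0 such that for all z₁, z₂ ∈ 𝔻_{r₀}, L₁|z₁ − z₂| ≤ |f(z₁) − f(z₂)| ≤ ((4M₂/π)·1/(1−r₀²) + (2/3)M₁)·|z₁ − z₂|. -/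

import Mathlib

open Metric MeasureTheory Set Filter

noncomputable section

/-- The Wirtinger derivative `∂f/∂z = (f_x - i f_y)/2`. -/
def wdz (f : ℂ → ℂ) (z : ℂ) : ℂ :=
  (fderiv ℝ f z 1 - Complex.I * fderiv ℝ f z Complex.I) / 2

/-- The Wirtinger derivative `∂f/∂z̄ = (f_x + i f_y)/2`. -/
def wdzbar (f : ℂ → ℂ) (z : ℂ) : ℂ :=
  (fderiv ℝ f z 1 + Complex.I * fderiv ℝ f z Complex.I) / 2

/-- The Laplacian `Δf = f_xx + f_yy` (equivalently `4 f_{z z̄}`). -/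
def lap (f : ℂ → ℂ) (z : ℂ) : ℂ :=
  fderiv ℝ (fun w => fderiv ℝ f w 1) z 1 +
    fderiv ℝ (fun w => fderiv ℝ f w Complex.I) z Complex.I

/-- The Poisson integral `P_ψ(z) = (1/2π) ∫₀^{2π} ((1-|z|²)/|1-z e^{-it}|²) ψ(e^{it}) dt`. -/
def poissonIntegral (ψ : ℂ → ℂ) (z : ℂ) : ℂ :=
  (1 / (2 * Real.pi) : ℝ) • ∫ t in (0:ℝ)..(2 * Real.pi),
    (((1 - ‖z‖ ^ 2) / ‖1 - z * Complex.exp (-(Complex.I * (t : ℂ)))‖ ^ 2 : ℝ) : ℂ) *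
      ψ (Complex.exp (Complex.I * (t : ℂ)))

/-- The Green potential `G_g(z) = (1/2π) ∫_𝔻 log|(1 - z w̄)/(z - w)| g(w) dA(w)`. -/
def greenPotential (g : ℂ → ℂ) (z : ℂ) : ℂ :=
  (1 / (2 * Real.pi) : ℝ) • ∫ w in ball (0:ℂ) 1,
    ((Real.log ‖(1 - z * (starRingEnd ℂ) w) / (z - w)‖ : ℝ) : ℂ) * g w

/-- `sup_{z ∈ 𝔻} |g(z)|`. -/
def supD (g : ℂ → ℂ) : ℝ := sSup ((fun z => ‖g z‖) '' ball (0:ℂ) 1)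

/-- The function `μ(r)` with constant `c` in place of `‖g‖_∞`. -/
def mu (c r : ℝ) : ℝ :=
  c * (1 - r ^ 2) / (8 * r ^ 2) *
    ((1 + r ^ 2) / (1 - r ^ 2) - (1 - r ^ 2) / (2 * r) * Real.log ((1 + r) / (1 - r)))


open Real in
lemma abscos_int (C x y : ℝ) :
    ∫ t in (-π)..π, (C + x * cos t + y * sin t) * |cos t| = 4 * C := by
  have hI : ∀ a b : ℝ, IntervalIntegrable
      (fun t => (C + x * cos t + y * sin t) * |cos t|) volume a b := fun a b =>
    Continuous.intervalIntegrable (by fun_prop) _ _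
  have hd : ∀ t : ℝ, HasDerivAt
      (fun t => C * sin t + x * (t / 2 + sin t * cos t / 2) + y * (sin t ^ 2 / 2))
      ((C + x * cos t + y * sin t) * cos t) t := by
    intro t
    have h1 := hasDerivAt_sin t
    have h2 := hasDerivAt_cos t
    have h := ((h1.const_mul C).add (((((hasDerivAt_id t).div_const 2).add
      ((h1.mul h2).div_const 2))).const_mul x)).add (((h1.pow 2).div_const 2).const_mul y)
    refine h.congr_deriv ?_
    have := sin_sq_add_cos_sq t
    norm_num
    linear_combination (-(x / 2)) * this
  have key : ∀ a b : ℝ, ∫ t in a..b, (C + x * cos t + y * sin t) * cos t =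
      (C * sin b + x * (b / 2 + sin b * cos b / 2) + y * (sin b ^ 2 / 2)) -
      (C * sin a + x * (a / 2 + sin a * cos a / 2) + y * (sin a ^ 2 / 2)) := by
    intro a b
    exact intervalIntegral.integral_eq_sub_of_hasDerivAt (fun t _ => hd t)
      (Continuous.intervalIntegrable (by fun_prop) _ _)
  have hpi := pi_pos
  have e1 : ∫ t in (-π)..(-(π/2)), (C + x * cos t + y * sin t) * |cos t| =
      ∫ t in (-π)..(-(π/2)), -((C + x * cos t + y * sin t) * cos t) := by
    apply intervalIntegral.integral_congr
    intro t ht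
    rw [uIcc_of_le (by linarith)] at ht
    have : cos t ≤ 0 := by
      rw [← cos_neg]
      exact cos_nonpos_of_pi_div_two_le_of_le (by linarith [ht.2]) (by linarith [ht.1])
    simp only [abs_of_nonpos this]; ring
  have e2 : ∫ t in (-(π/2))..(π/2), (C + x * cos t + y * sin t) * |cos t| =
      ∫ t in (-(π/2))..(π/2), (C + x * cos t + y * sin t) * cos t := by
    apply intervalIntegral.integral_congr
    intro t ht
    rw [uIcc_of_le (by linarith)] at ht
    have : 0 ≤ cos t := cos_nonneg_of_neg_pi_div_two_le_of_le (by linarith [ht.1]) ht.2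
    simp only [abs_of_nonneg this]
  have e3 : ∫ t in (π/2)..π, (C + x * cos t + y * sin t) * |cos t| =
      ∫ t in (π/2)..π, -((C + x * cos t + y * sin t) * cos t) := by
    apply intervalIntegral.integral_congr
    intro t ht
    rw [uIcc_of_le (by linarith)] at ht
    have : cos t ≤ 0 :=
      cos_nonpos_of_pi_div_two_le_of_le ht.1 (by linarith [ht.2])
    simp only [abs_of_nonpos this]; ring
  rw [← intervalIntegral.integral_add_adjacent_intervals (hI _ (-(π/2))) (hI _ _),
    ← intervalIntegral.integral_add_adjacent_intervals (hI (-(π/2)) (π/2)) (hI _ _), e1, e2, e3,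
    intervalIntegral.integral_neg, intervalIntegral.integral_neg, key, key, key]
  simp
  ring

open Real in
lemma abscos_int' : ∫ t in (-π)..π, |cos t| = 4 := by
  have := abscos_int 1 0 0
  simpa using this

open Real in
lemma cos_bound {F : ℝ → ℂ} {M : ℝ} (h : ∀ t, ‖F t‖ ≤ M) :
    ‖∫ t in (-π)..π, F t * (cos t : ℂ)‖ ≤ 4 * M := by
  have : ∫ t in (-π)..π, M * |cos t| = 4 * M := by
    rw [intervalIntegral.integral_const_mul, abscos_int']; ring
  rw [← this]
  apply intervalIntegral.norm_integral_le_of_norm_le (by linarith [pi_pos])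
  · filter_upwards with t _
    rw [norm_mul, Complex.norm_real, Real.norm_eq_abs]
    exact mul_le_mul_of_nonneg_right (h t) (abs_nonneg _)
  · exact Continuous.intervalIntegrable (by fun_prop) _ _

open Real in
lemma cos_bound' {F : ℝ → ℂ} {C x y : ℝ} (h : ∀ t, ‖F t‖ ≤ C + x * cos t + y * sin t) :
    ‖∫ t in (-π)..π, F t * (cos t : ℂ)‖ ≤ 4 * C := by
  rw [← abscos_int C x y]
  apply intervalIntegral.norm_integral_le_of_norm_le (by linarith [pi_pos])
  · filter_upwards with t _
    rw [norm_mul, Complex.norm_real, Real.norm_eq_abs]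
    exact mul_le_mul_of_nonneg_right (h t) (abs_nonneg _)
  · exact Continuous.intervalIntegrable (by fun_prop) _ _

open Real in
lemma cos_bound_strict {F : ℝ → ℂ} {M : ℝ} (hM : 0 < M) (hc : Continuous F)
    (h : ∀ t, ‖F t‖ ≤ M) :
    ‖∫ t in (-π)..π, F t * (cos t : ℂ)‖ < 4 * M := by
  set J := ∫ t in (-π)..π, F t * (cos t : ℂ) with hJ
  obtain ⟨a, ha, haJ⟩ : ∃ a : ℂ, ‖a‖ = 1 ∧ a * J = ‖J‖ := by
    by_cases h0 : J = 0
    · exact ⟨1, by simp, by simp [h0]⟩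
    · refine ⟨(‖J‖ : ℂ) / J, by simp [h0], by field_simp⟩
  have hpi := pi_pos
  have hre : ‖J‖ = ∫ t in (-π)..π, (a * F t).re * cos t := by
    have h1 : (‖J‖ : ℝ) = (a * J).re := by rw [haJ]; simp
    rw [h1, hJ, ← intervalIntegral.integral_const_mul]
    have := Complex.reCLM.intervalIntegral_comp_comm (μ := volume) (a := -π) (b := π)
      (f := fun t => a * (F t * (cos t : ℂ)))
      (Continuous.intervalIntegrable (by fun_prop) _ _)
    simp only [Complex.reCLM_apply] at this
    rw [← this]
    apply intervalIntegral.integral_congr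
    intro t _
    simp only [← mul_assoc, Complex.re_mul_ofReal]
  have h4 : ∫ t in (-π)..π, M * |cos t| = 4 * M := by
    rw [intervalIntegral.integral_const_mul, abscos_int']; ring
  have hb : ∀ t, |(a * F t).re| ≤ M := fun t =>
    (Complex.abs_re_le_norm _).trans (by rw [norm_mul, ha, one_mul]; exact h t)
  have hle : ∀ t, (a * F t).re * cos t ≤ M * |cos t| := fun t =>
    (le_abs_self _).trans (by rw [abs_mul]; exact mul_le_mul_of_nonneg_right (hb t) (abs_nonneg _))
  rw [hre, ← h4]
  apply intervalIntegral.integral_lt_integral_of_continuousOn_of_le_of_exists_lt (by linarith)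
    (by fun_prop) (by fun_prop) (fun t _ => hle t)
  by_contra! hcon
  have heq : ∀ t ∈ Icc (-π) π, (a * F t).re * cos t = M * |cos t| := fun t ht =>
    le_antisymm (hle t) (hcon t ht)
  have c1 : IsClosed {t | (a * F t).re = M} := isClosed_eq (by fun_prop) (by fun_prop)
  have c2 : IsClosed {t | (a * F t).re = -M} := isClosed_eq (by fun_prop) (by fun_prop)
  have i1 : Ioo 0 (π/2) ⊆ {t | (a * F t).re = M} := by
    intro t ht
    have hp : 0 < cos t := cos_pos_of_mem_Ioo ⟨by linarith [ht.1], ht.2⟩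
    have := heq t ⟨by linarith [ht.1], by linarith [ht.2]⟩
    rw [abs_of_pos hp] at this
    exact mul_right_cancel₀ hp.ne' this
  have i2 : Ioo (π/2) π ⊆ {t | (a * F t).re = -M} := by
    intro t ht
    have hp : cos t < 0 := cos_neg_of_pi_div_two_lt_of_lt ht.1 (by linarith [ht.2])
    have := heq t ⟨by linarith [ht.1], by linarith [ht.2]⟩
    rw [abs_of_neg hp] at this
    refine mul_right_cancel₀ hp.ne (by linarith)
  have m1 := c1.closure_subset_iff.2 i1 (by
    rw [closure_Ioo (by linarith)]; exact ⟨by linarith, le_rfl⟩ : π/2 ∈ closure (Ioo 0 (π/2)))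
  have m2 := c2.closure_subset_iff.2 i2 (by
    rw [closure_Ioo (by linarith)]; exact ⟨le_rfl, by linarith⟩ : π/2 ∈ closure (Ioo (π/2) π))
  simp only [mem_ofPred_eq] at m1 m2
  linarith


open Real in
lemma param_deriv {F F' : ℝ → ℝ → ℂ} {a b : ℝ}
    (hF : ∀ x, Continuous (F x))
    (hF' : Continuous (fun p : ℝ × ℝ => F' p.1 p.2))
    (hd : ∀ x t, HasDerivAt (fun x => F x t) (F' x t) x) (x₀ : ℝ) :
    HasDerivAt (fun x => ∫ t in a..b, F x t) (∫ t in a..b, F' x₀ t) x₀ := by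
  obtain ⟨C, hC⟩ := ((isCompact_closedBall x₀ 1).prod (isCompact_uIcc (a := a) (b := b))).exists_bound_of_continuousOn
    hF'.continuousOn
  refine (intervalIntegral.hasDerivAt_integral_of_dominated_loc_of_deriv_le
    (s := ball x₀ 1) (bound := fun _ => C) (ball_mem_nhds x₀ one_pos) ?_ ?_ ?_ ?_ ?_ ?_).2
  · exact Eventually.of_forall fun x => (hF x).aestronglyMeasurable
  · exact (hF x₀).intervalIntegrable _ _
  · exact Continuous.aestronglyMeasurable (hF'.comp (by fun_prop : Continuous fun t : ℝ => (x₀, t)))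
  · filter_upwards with t ht x hx
    exact hC (x, t) ⟨ball_subset_closedBall hx, uIoc_subset_uIcc ht⟩
  · simp
  · filter_upwards with t _ x _
    exact hd x t

/-- second derivative -/
def D2 (v : ℂ → ℂ) (z : ℂ) : ℂ →L[ℝ] ℂ →L[ℝ] ℂ := fderiv ℝ (fderiv ℝ v) z

lemma lap_eq_D2 {v : ℂ → ℂ} (hv : ContDiff ℝ 2 v) (z : ℂ) {E : ℂ} (hE : ‖E‖ = 1) :
    lap v z = D2 v z E E + D2 v z (Complex.I * E) (Complex.I * E) := by
  have hd : Differentiable ℝ (fderiv ℝ v) :=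
    (hv.fderiv_right (m := 1) (by norm_num)).differentiable (by norm_num)
  have key : ∀ x : ℂ, fderiv ℝ (fun w => fderiv ℝ v w x) z x = D2 v z x x := by
    intro x
    have := ((hd z).hasFDerivAt.clm_apply (hasFDerivAt_const x z)).fderiv
    rw [this]
    simp [D2]
  have hs : D2 v z 1 Complex.I = D2 v z Complex.I 1 := by
    have := (hv.contDiffAt (x := z)).isSymmSndFDerivAt (by simp)
    exact this 1 Complex.I
  have hE' : E = E.re • (1:ℂ) + E.im • Complex.I := by
    simp
  have hIE : Complex.I * E = (-E.im) • (1:ℂ) + E.re • Complex.I := by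
    apply Complex.ext <;> simp
  have hn : E.re ^ 2 + E.im ^ 2 = 1 := by
    have := Complex.sq_norm E
    rw [hE, Complex.normSq_apply] at this; linarith
  have hn' : (E.re : ℂ) ^ 2 + (E.im : ℂ) ^ 2 = 1 := by exact_mod_cast hn
  have gen : ∀ x y : ℝ, D2 v z (x • (1:ℂ) + y • Complex.I) (x • (1:ℂ) + y • Complex.I) =
      (x:ℂ) ^ 2 * D2 v z 1 1 + 2 * x * y * D2 v z Complex.I 1
        + (y:ℂ) ^ 2 * D2 v z Complex.I Complex.I := by
    intro x y
    rw [map_add, map_smul, map_smul, map_add (D2 v z), map_smul (D2 v z), map_smul (D2 v z)]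
    simp only [_root_.add_apply, _root_.smul_apply, hs, Complex.real_smul]
    ring
  have g1 := gen E.re E.im
  have g2 := gen (-E.im) E.re
  rw [← hE'] at g1
  rw [← hIE] at g2
  rw [lap, key, key, g1, g2]
  push_cast
  linear_combination (-(D2 v z 1 1) - (D2 v z Complex.I Complex.I)) * hn'

/-- moving unit vector -/
def EE (e : ℂ) (t : ℝ) : ℂ := e * Complex.exp (t * Complex.I)

lemma norm_EE {e : ℂ} (he : ‖e‖ = 1) (t : ℝ) : ‖EE e t‖ = 1 := by
  simp [EE, he, Complex.norm_exp_ofReal_mul_I]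

lemma continuous_EE (e : ℂ) : Continuous (EE e) := by unfold EE; fun_prop

lemma hasDerivAt_EE (e : ℂ) (t : ℝ) : HasDerivAt (EE e) (Complex.I * EE e t) t := by
  have h : HasDerivAt (fun t : ℝ => (t : ℂ) * Complex.I) (1 * Complex.I) t :=
    (Complex.ofRealCLM.hasDerivAt (x := t)).mul_const _
  have h := (h.cexp).const_mul e
  refine h.congr_deriv ?_
  simp only [EE]; ring

/-- phi -/
def ph (v : ℂ → ℂ) (c e : ℂ) (ρ : ℝ) : ℂ :=
  ∫ t in (-Real.pi)..Real.pi, v (c + ρ * EE e t) * (Real.cos t : ℂ)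

/-- phi' -/
def ph1 (v : ℂ → ℂ) (c e : ℂ) (ρ : ℝ) : ℂ :=
  ∫ t in (-Real.pi)..Real.pi, fderiv ℝ v (c + ρ * EE e t) (EE e t) * (Real.cos t : ℂ)

/-- psi -/
def ps (v : ℂ → ℂ) (c e : ℂ) (ρ : ℝ) : ℂ := (ρ : ℂ) ^ 2 * ph1 v c e ρ - ρ * ph v c e ρ

lemma hasDerivAt_line (c E : ℂ) (ρ : ℝ) : HasDerivAt (fun ρ : ℝ => c + ρ * E) E ρ := by
  have := ((Complex.ofRealCLM.hasDerivAt (x := ρ)).mul_const E).const_add c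
  simpa using this

lemma ph_deriv {v : ℂ → ℂ} (hv : ContDiff ℝ 2 v) (c e : ℂ) (ρ : ℝ) :
    HasDerivAt (ph v c e) (ph1 v c e ρ) ρ := by
  have hE := continuous_EE e
  have hc1 : Continuous (fderiv ℝ v) := hv.continuous_fderiv (by norm_num)
  have hvc := hv.continuous
  refine param_deriv (F := fun ρ t => v (c + ρ * EE e t) * (Real.cos t : ℂ))
    (F' := fun ρ t => fderiv ℝ v (c + ρ * EE e t) (EE e t) * (Real.cos t : ℂ)) ?_ ?_ ?_ ρ
  · intro x; fun_prop
  · fun_prop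
  · intro x t
    have h := ((hv.differentiable (by norm_num)) (c + x * EE e t)).hasFDerivAt.comp_hasDerivAt x
      (hasDerivAt_line c (EE e t) x)
    exact h.mul_const _

lemma ph1_deriv {v : ℂ → ℂ} (hv : ContDiff ℝ 2 v) (c e : ℂ) (ρ : ℝ) :
    HasDerivAt (ph1 v c e) (∫ t in (-Real.pi)..Real.pi,
      D2 v (c + ρ * EE e t) (EE e t) (EE e t) * (Real.cos t : ℂ)) ρ := by
  have hE := continuous_EE e
  have hv1 : ContDiff ℝ 1 (fderiv ℝ v) := hv.fderiv_right (m := 1) (by norm_num)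
  have hc1 : Continuous (fderiv ℝ v) := hv1.continuous
  have hc2 : Continuous (D2 v) := hv1.continuous_fderiv (by norm_num)
  refine param_deriv (F := fun ρ t => fderiv ℝ v (c + ρ * EE e t) (EE e t) * (Real.cos t : ℂ))
    (F' := fun ρ t => D2 v (c + ρ * EE e t) (EE e t) (EE e t) * (Real.cos t : ℂ)) ?_ ?_ ?_ ρ
  · intro x; fun_prop
  · fun_prop
  · intro x t
    have h := ((hv1.differentiable (by norm_num)) (c + x * EE e t)).hasFDerivAt.comp_hasDerivAt x
      (hasDerivAt_line c (EE e t) x)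
    have h2 := h.clm_apply (hasDerivAt_const x (EE e t))
    refine (h2.mul_const _).congr_deriv ?_
    simp [D2]

lemma parts {v : ℂ → ℂ} (hv : ContDiff ℝ 2 v) (c e : ℂ) (ρ : ℝ) :
    (ρ:ℂ) ^ 2 * (∫ t in (-Real.pi)..Real.pi,
      D2 v (c + ρ * EE e t) (Complex.I * EE e t) (Complex.I * EE e t) * (Real.cos t : ℂ))
      = ρ * ph1 v c e ρ - ph v c e ρ := by
  have hE := continuous_EE e
  have hvc := hv.continuous
  have hv1 : ContDiff ℝ 1 (fderiv ℝ v) := hv.fderiv_right (m := 1) (by norm_num)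
  have hc1 : Continuous (fderiv ℝ v) := hv1.continuous
  have hc2 : Continuous (D2 v) := hv1.continuous_fderiv (by norm_num)
  have hd : ∀ t : ℝ, HasDerivAt (fun t : ℝ =>
      ρ * (fderiv ℝ v (c + ρ * EE e t) (Complex.I * EE e t)) * (Real.cos t : ℂ)
        + v (c + ρ * EE e t) * (Real.sin t : ℂ))
      ((ρ:ℂ) ^ 2 * (D2 v (c + ρ * EE e t) (Complex.I * EE e t) (Complex.I * EE e t)
        * (Real.cos t : ℂ))
        - ρ * (fderiv ℝ v (c + ρ * EE e t) (EE e t) * (Real.cos t : ℂ))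
        + v (c + ρ * EE e t) * (Real.cos t : ℂ)) t := by
    intro t
    have hl : HasDerivAt (fun t : ℝ => c + ρ * EE e t) (ρ * (Complex.I * EE e t)) t :=
      ((hasDerivAt_EE e t).const_mul (ρ:ℂ)).const_add c
    have hcos : HasDerivAt (fun t : ℝ => (Real.cos t : ℂ)) ((-Real.sin t : ℝ) : ℂ) t :=
      (Real.hasDerivAt_cos t).ofReal_comp
    have hsin : HasDerivAt (fun t : ℝ => (Real.sin t : ℂ)) ((Real.cos t : ℝ) : ℂ) t :=
      (Real.hasDerivAt_sin t).ofReal_comp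
    have h1 := ((hv1.differentiable (by norm_num)) (c + ρ * EE e t)).hasFDerivAt.comp_hasDerivAt t hl
    have h2 := h1.clm_apply ((hasDerivAt_EE e t).const_mul Complex.I)
    have h0 := ((hv.differentiable (by norm_num)) (c + ρ * EE e t)).hasFDerivAt.comp_hasDerivAt t hl
    have h3 := ((h2.const_mul (ρ:ℂ)).mul hcos).add (h0.mul hsin)
    refine h3.congr_deriv ?_
    have r1 : ∀ (L : ℂ →L[ℝ] ℂ) (w : ℂ), L (ρ * w) = ρ * L w := by
      intro L w
      rw [← Complex.real_smul, map_smul, Complex.real_smul]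
    have r2 : fderiv ℝ (fderiv ℝ v) (c + ρ * EE e t) (ρ * (Complex.I * EE e t)) =
        (ρ:ℝ) • D2 v (c + ρ * EE e t) (Complex.I * EE e t) := by
      have : (ρ:ℂ) * (Complex.I * EE e t) = ρ • (Complex.I * EE e t) := by
        rw [Complex.real_smul]
      rw [this, map_smul]; rfl
    have r3 : Complex.I * (Complex.I * EE e t) = - EE e t := by
      rw [← mul_assoc, Complex.I_mul_I]; ring
    simp only [Function.comp, r1, r2, r3, map_neg, _root_.smul_apply, Complex.real_smul]
    push_cast
    ring
  have hi := intervalIntegral.integral_eq_sub_of_hasDerivAt (a := -Real.pi) (b := Real.pi)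
    (fun t _ => hd t) (Continuous.intervalIntegrable (by fun_prop) _ _)
  rw [intervalIntegral.integral_add (Continuous.intervalIntegrable (by fun_prop) _ _)
    (Continuous.intervalIntegrable (by fun_prop) _ _),
    intervalIntegral.integral_sub (Continuous.intervalIntegrable (by fun_prop) _ _)
    (Continuous.intervalIntegrable (by fun_prop) _ _), intervalIntegral.integral_const_mul,
    intervalIntegral.integral_const_mul] at hi
  have hper : EE e (-Real.pi) = EE e Real.pi := by
    simp [EE, Complex.exp_neg, Complex.exp_pi_mul_I]
  rw [hper] at hi
  simp at hi
  unfold ph1 ph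
  simp only [Complex.ofReal_cos]
  linear_combination hi

lemma ps_deriv {v : ℂ → ℂ} (hv : ContDiff ℝ 2 v) (c : ℂ) {e : ℂ} (he : ‖e‖ = 1) (ρ : ℝ) :
    HasDerivAt (ps v c e) ((ρ:ℂ) ^ 2 * ∫ t in (-Real.pi)..Real.pi,
      lap v (c + ρ * EE e t) * (Real.cos t : ℂ)) ρ := by
  have hE := continuous_EE e
  have hv1 : ContDiff ℝ 1 (fderiv ℝ v) := hv.fderiv_right (m := 1) (by norm_num)
  have hc2 : Continuous (D2 v) := hv1.continuous_fderiv (by norm_num)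
  have h0 : HasDerivAt (fun ρ : ℝ => (ρ:ℂ)) 1 ρ := Complex.ofRealCLM.hasDerivAt
  have h := ((h0.pow 2).mul (ph1_deriv hv c e ρ)).sub (h0.mul (ph_deriv hv c e ρ))
  refine h.congr_deriv ?_
  have hl : ∀ t, lap v (c + ρ * EE e t) * (Real.cos t : ℂ) =
      D2 v (c + ρ * EE e t) (EE e t) (EE e t) * (Real.cos t : ℂ) +
      D2 v (c + ρ * EE e t) (Complex.I * EE e t) (Complex.I * EE e t) * (Real.cos t : ℂ) := by
    intro t
    rw [lap_eq_D2 hv _ (norm_EE he t)]; ring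
  simp only [hl]
  rw [intervalIntegral.integral_add (Continuous.intervalIntegrable (by fun_prop) _ _)
    (Continuous.intervalIntegrable (by fun_prop) _ _), mul_add, parts hv]
  push_cast
  simp only [Pi.pow_apply]
  ring


lemma continuous_lap {v : ℂ → ℂ} (hv : ContDiff ℝ 2 v) : Continuous (lap v) := by
  have hv1 : ContDiff ℝ 1 (fderiv ℝ v) := hv.fderiv_right (m := 1) (by norm_num)
  have hc2 : Continuous (D2 v) := hv1.continuous_fderiv (by norm_num)
  have : lap v = fun z => D2 v z 1 1 + D2 v z (Complex.I * 1) (Complex.I * 1) := by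
    funext z; exact lap_eq_D2 hv z (by simp)
  rw [this]; fun_prop

lemma ps_zero (v : ℂ → ℂ) (c e : ℂ) : ps v c e 0 = 0 := by simp [ps]

lemma norm_line {e : ℂ} (he : ‖e‖ = 1) (ρ t : ℝ) : ‖(ρ : ℂ) * EE e t‖ = |ρ| := by
  rw [norm_mul, norm_EE he, mul_one, Complex.norm_real, Real.norm_eq_abs]

lemma ps_bound {v : ℂ → ℂ} (hv : ContDiff ℝ 2 v) {c e : ℂ} (he : ‖e‖ = 1) {R M : ℝ}
    (hM : ∀ w ∈ closedBall c R, ‖lap v w‖ ≤ M) :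
    ∀ ρ ∈ Icc 0 R, ‖ps v c e ρ‖ ≤ 4 * M * ρ ^ 3 / 3 := by
  have := image_norm_le_of_norm_deriv_right_le_deriv_boundary (f := ps v c e)
    (f' := fun ρ => (ρ:ℂ) ^ 2 * ∫ t in (-Real.pi)..Real.pi,
      lap v (c + ρ * EE e t) * (Real.cos t : ℂ)) (a := 0) (b := R)
    (B := fun ρ => 4 * M * ρ ^ 3 / 3) (B' := fun ρ => 4 * M * ρ ^ 2)
    (fun ρ _ => (ps_deriv hv c he ρ).continuousAt.continuousWithinAt)
    (fun ρ _ => (ps_deriv hv c he ρ).hasDerivWithinAt)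
    (by simp [ps_zero]) ?_ ?_
  · intro ρ hρ; exact this hρ
  · intro x
    refine (((hasDerivAt_pow 3 x).const_mul (4 * M)).div_const 3).congr_deriv ?_
    norm_num; ring
  · intro x hx
    have := cos_bound (F := fun t => lap v (c + x * EE e t)) (M := M) (by
      intro t
      apply hM
      rw [mem_closedBall, dist_eq_norm, add_sub_cancel_left, norm_line he, abs_of_nonneg hx.1]
      exact hx.2.le)
    rw [norm_mul, norm_pow, Complex.norm_real, Real.norm_eq_abs, sq_abs]
    nlinarith [sq_nonneg x]

lemma A_deriv {v : ℂ → ℂ} (hv : ContDiff ℝ 2 v) (c e : ℂ) {ρ : ℝ} (hρ : 0 < ρ) :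
    HasDerivAt (fun ρ : ℝ => ph v c e ρ / ρ) (ps v c e ρ / (ρ:ℂ) ^ 3) ρ := by
  have h0 : HasDerivAt (fun ρ : ℝ => (ρ:ℂ)) 1 ρ := Complex.ofRealCLM.hasDerivAt
  have hne : (ρ:ℂ) ≠ 0 := by exact_mod_cast hρ.ne'
  refine ((ph_deriv hv c e ρ).div h0 hne).congr_deriv ?_
  unfold ps
  field_simp

open Real in
lemma int_EE_cos (e : ℂ) : ∫ t in (-π)..π, (cos t) • EE e t = π * e := by
  have hd : ∀ t : ℝ, HasDerivAt (fun t : ℝ => e * (t / 2 : ℂ) + (e * (cos t : ℂ) * (sin t : ℂ) / 2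
      + e * Complex.I * ((sin t : ℂ) ^ 2 / 2)))
      ((cos t) • EE e t) t := by
    intro t
    have h0 : HasDerivAt (fun ρ : ℝ => (ρ:ℂ)) 1 t := Complex.ofRealCLM.hasDerivAt
    have hcos : HasDerivAt (fun t : ℝ => (Real.cos t : ℂ)) ((-Real.sin t : ℝ) : ℂ) t :=
      (Real.hasDerivAt_cos t).ofReal_comp
    have hsin : HasDerivAt (fun t : ℝ => (Real.sin t : ℂ)) ((Real.cos t : ℝ) : ℂ) t :=
      (Real.hasDerivAt_sin t).ofReal_comp
    have h := ((h0.div_const 2).const_mul e).add ((((hcos.const_mul e).mul hsin).div_const 2).add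
      (((hsin.pow 2).div_const 2).const_mul (e * Complex.I)))
    refine h.congr_deriv ?_
    have hs : (sin t : ℂ) ^ 2 + (cos t : ℂ) ^ 2 = 1 := by exact_mod_cast sin_sq_add_cos_sq t
    rw [Complex.real_smul, EE, Complex.exp_mul_I, ← Complex.ofReal_cos, ← Complex.ofReal_sin]
    push_cast at hs ⊢
    norm_num
    linear_combination (-(e/2)) * hs
  have hE := continuous_EE e
  rw [intervalIntegral.integral_eq_sub_of_hasDerivAt (fun t _ => hd t)
    (Continuous.intervalIntegrable (by fun_prop) _ _)]
  simp
  ring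

lemma ph1_zero (v : ℂ → ℂ) (c e : ℂ) : ph1 v c e 0 = Real.pi * fderiv ℝ v c e := by
  have hE := continuous_EE e
  unfold ph1
  have : ∀ t, fderiv ℝ v (c + ((0:ℝ):ℂ) * EE e t) (EE e t) * (Real.cos t : ℂ) =
      fderiv ℝ v c (Real.cos t • EE e t) := by
    intro t
    rw [map_smul, Complex.real_smul]
    simp [mul_comm]
  simp only [this]
  rw [ContinuousLinearMap.intervalIntegral_comp_comm _
    (Continuous.intervalIntegrable (by fun_prop) _ _), int_EE_cos, ← Complex.real_smul, map_smul,
    Complex.real_smul]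

lemma ph_zero (v : ℂ → ℂ) (c e : ℂ) : ph v c e 0 = 0 := by
  unfold ph
  simp only [Complex.ofReal_zero, zero_mul, add_zero]
  rw [intervalIntegral.integral_const_mul, intervalIntegral.integral_ofReal]
  simp

lemma center_est {v : ℂ → ℂ} (hv : ContDiff ℝ 2 v) {c e : ℂ} (he : ‖e‖ = 1) {R M : ℝ}
    (hR : 0 < R) (hM : ∀ w ∈ closedBall c R, ‖lap v w‖ ≤ M) :
    ‖ph v c e R / R - Real.pi * fderiv ℝ v c e‖ ≤ 4 * M / 3 * R := by
  have hM0 : 0 ≤ M := (norm_nonneg _).trans (hM c (mem_closedBall_self hR.le))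
  have hb : ∀ δ ∈ Ioc 0 R, ‖ph v c e R / R - ph v c e δ / δ‖ ≤ 4 * M / 3 * R := by
    intro δ hδ
    have := Convex.norm_image_sub_le_of_norm_hasDerivWithin_le (𝕜 := ℝ) (s := Ioc 0 R)
      (f := fun ρ : ℝ => ph v c e ρ / ρ) (f' := fun ρ => ps v c e ρ / (ρ:ℂ) ^ 3) (C := 4 * M / 3)
      (fun x hx => (A_deriv hv c e hx.1).hasDerivWithinAt) (by
        intro x hx
        have hx3 : 0 < x ^ 3 := pow_pos hx.1 3
        rw [norm_div, norm_pow, Complex.norm_real, Real.norm_eq_abs, abs_of_pos hx.1,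
          div_le_iff₀ hx3]
        have := ps_bound hv he hM x ⟨hx.1.le, hx.2⟩
        linarith) (convex_Ioc 0 R) hδ ⟨hR, le_rfl⟩
    refine this.trans ?_
    rw [Real.norm_eq_abs, abs_of_nonneg (by linarith [hδ.2])]
    apply mul_le_mul_of_nonneg_left (by linarith [hδ.1]) (by positivity)
  have hs := (hasDerivAt_iff_tendsto_slope.1 (ph_deriv hv c e 0))
  rw [ph1_zero] at hs
  have hs2 : Tendsto (fun δ : ℝ => ph v c e δ / δ) (nhdsWithin 0 (Ioi 0))
      (nhds (Real.pi * fderiv ℝ v c e)) := by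
    refine (hs.mono_left (nhdsWithin_mono _ (fun x hx => (ne_of_gt hx)))).congr ?_
    intro x
    simp [slope, ph_zero, div_eq_inv_mul]
  refine le_of_tendsto (tendsto_const_nhds.sub hs2).norm ?_
  filter_upwards [Ioc_mem_nhdsGT hR] with δ hδ using hb δ hδ

open Real in
lemma ps_area {v : ℂ → ℂ} (hv : ContDiff ℝ 2 v) (c : ℂ) {e : ℂ} (he : ‖e‖ = 1) {R : ℝ}
    (hR : 0 < R) :
    ps v c e R = ∫ w in ball (0:ℂ) R, lap v (c + e * w) * (w.re : ℂ) := by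
  have hE := continuous_EE e
  have hlc := continuous_lap hv
  have hcont : Continuous (fun p : ℝ × ℝ =>
      (p.1:ℂ) ^ 2 * (lap v (c + p.1 * EE e p.2) * (cos p.2 : ℂ))) := by fun_prop
  have h1 : ps v c e R = ∫ ρ in (0:ℝ)..R, ∫ t in (-π)..π,
      (ρ:ℂ) ^ 2 * (lap v (c + ρ * EE e t) * (cos t : ℂ)) := by
    have hc : Continuous (fun ρ : ℝ => ∫ t in (-π)..π,
      (ρ:ℂ) ^ 2 * (lap v (c + ρ * EE e t) * (cos t : ℂ))) :=
        intervalIntegral.continuous_parametric_intervalIntegral_of_continuous' (by exact hcont) _ _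
    have := intervalIntegral.integral_eq_sub_of_hasDerivAt (a := 0) (b := R)
      (f := ps v c e) (f' := fun ρ => ∫ t in (-π)..π,
      (ρ:ℂ) ^ 2 * (lap v (c + ρ * EE e t) * (cos t : ℂ))) (fun ρ _ => by
        simp only [intervalIntegral.integral_const_mul]
        exact ps_deriv hv c he ρ) (hc.intervalIntegrable _ _)
    rw [this, ps_zero, sub_zero]
  rw [h1, ← integral_indicator measurableSet_ball, ← Complex.integral_comp_polarCoord_symm]
  have hpi := pi_pos
  rw [intervalIntegral.integral_of_le hR.le, integral_Ioc_eq_integral_Ioo]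
  have h2 : ∀ ρ : ℝ, ∫ t in (-π)..π, (ρ:ℂ) ^ 2 * (lap v (c + ρ * EE e t) * (cos t : ℂ)) =
      ∫ t in Ioo (-π) π, (ρ:ℂ) ^ 2 * (lap v (c + ρ * EE e t) * (cos t : ℂ)) := by
    intro ρ
    rw [intervalIntegral.integral_of_le (by linarith), integral_Ioc_eq_integral_Ioo]
  simp only [h2]
  have h3 := setIntegral_prod (μ := volume) (ν := volume) (s := Ioo 0 R) (t := Ioo (-π) π)
    (fun p : ℝ × ℝ => (p.1:ℂ) ^ 2 * (lap v (c + p.1 * EE e p.2) * (cos p.2 : ℂ))) (by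
      apply IntegrableOn.mono_set (t := Icc 0 R ×ˢ Icc (-π) π)
      · exact hcont.continuousOn.integrableOn_compact (isCompact_Icc.prod isCompact_Icc)
      · exact prod_mono Ioo_subset_Icc_self Ioo_subset_Icc_self)
  simp only at h3
  rw [← h3, ← Measure.volume_eq_prod]
  rw [polarCoord_target, ← integral_indicator (measurableSet_Ioo.prod measurableSet_Ioo),
    ← integral_indicator (measurableSet_Ioi.prod measurableSet_Ioo)]
  congr 1
  funext p
  have hw : Complex.polarCoord.symm p = p.1 * Complex.exp (p.2 * Complex.I) := by
    rw [Complex.polarCoord_symm_apply, Complex.exp_mul_I]; simp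
  by_cases hp : p ∈ Ioi (0:ℝ) ×ˢ Ioo (-π) π
  · rw [indicator_of_mem hp]
    have hp1 : 0 < p.1 := hp.1
    by_cases hpR : p.1 < R
    · have hm : p ∈ Ioo 0 R ×ˢ Ioo (-π) π := ⟨⟨hp1, hpR⟩, hp.2⟩
      have hb : Complex.polarCoord.symm p ∈ ball (0:ℂ) R := by
        rw [mem_ball_zero_iff, Complex.norm_polarCoord_symm, abs_of_pos hp1]; exact hpR
      rw [indicator_of_mem hm, indicator_of_mem hb, Complex.real_smul, hw]
      have hre : ((p.1 : ℂ) * Complex.exp (p.2 * Complex.I)).re = p.1 * cos p.2 := by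
        rw [Complex.re_ofReal_mul, Complex.exp_ofReal_mul_I_re]
      have hz : c + e * (p.1 * Complex.exp (p.2 * Complex.I)) = c + p.1 * EE e p.2 := by
        simp only [EE]; ring
      rw [hre, hz]
      push_cast
      ring
    · have hm : p ∉ Ioo 0 R ×ˢ Ioo (-π) π := fun h => hpR h.1.2
      have hb : Complex.polarCoord.symm p ∉ ball (0:ℂ) R := by
        rw [mem_ball_zero_iff, Complex.norm_polarCoord_symm, abs_of_pos hp1]; exact hpR
      rw [indicator_of_notMem hm, indicator_of_notMem hb, smul_zero]
  · have hm : p ∉ Ioo 0 R ×ˢ Ioo (-π) π := fun h => hp ⟨h.1.1, h.2⟩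
    rw [indicator_of_notMem hm, indicator_of_notMem hp]


lemma vol_ball_real (a : ℂ) {r : ℝ} (hr : 0 ≤ r) :
    volume.real (ball a r) = Real.pi * r ^ 2 := by
  rw [Measure.real, Complex.volume_ball]
  simp [ENNReal.toReal_ofReal hr, mul_comm]

lemma ball_inter_diff (a b : ℂ) {R r : ℝ} (hr : dist a b ≤ r) (hR : r ≤ R) (h0 : 0 < R) :
    volume.real (ball a R \ ball b R) ≤ Real.pi * (R * r) := by
  have hr0 : 0 ≤ r := dist_nonneg.trans hr
  have hd : dist a b = ‖a - b‖ := dist_eq_norm a b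
  have h1 : ball ((a + b) / 2) (R - r / 2) ⊆ ball a R := by
    apply ball_subset_ball'
    have : dist ((a + b) / 2) a = dist a b / 2 := by
      rw [dist_comm, dist_eq_norm, hd, show a - (a + b) / 2 = (a - b) / 2 by ring, norm_div]
      simp
    linarith
  have h2 : ball ((a + b) / 2) (R - r / 2) ⊆ ball b R := by
    apply ball_subset_ball'
    have : dist ((a + b) / 2) b = dist a b / 2 := by
      rw [dist_eq_norm, hd, show (a + b) / 2 - b = (a - b) / 2 by ring, norm_div]
      simp
    linarith
  have h3 : ball a R \ ball b R ⊆ ball a R \ ball ((a + b) / 2) (R - r / 2) :=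
    sdiff_subset_sdiff_right h2
  have hfin : volume (ball a R) ≠ ⊤ := measure_ball_lt_top.ne
  calc volume.real (ball a R \ ball b R)
      ≤ volume.real (ball a R \ ball ((a + b) / 2) (R - r / 2)) :=
        measureReal_mono h3 (ne_top_of_le_ne_top hfin (measure_mono sdiff_subset))
    _ = volume.real (ball a R) - volume.real (ball ((a + b) / 2) (R - r / 2)) :=
        measureReal_sdiff h1 measurableSet_ball
    _ ≤ Real.pi * (R * r) := by
        rw [vol_ball_real _ h0.le, vol_ball_real _ (by linarith), ← mul_sub]
        apply mul_le_mul_of_nonneg_left _ Real.pi_pos.le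
        nlinarith [sq_nonneg r]

lemma ps_diff {v : ℂ → ℂ} (hv : ContDiff ℝ 2 v) {z e : ℂ} (he : ‖e‖ = 1) {R r M : ℝ}
    (hz : ‖z‖ ≤ r) (hr : r ≤ R) (hR : 0 < R)
    (hM : ∀ w ∈ ball (0:ℂ) (R + r), ‖lap v w‖ ≤ M) :
    ‖ps v z e R - ps v 0 e R‖ ≤ 3 * Real.pi * r * R ^ 2 * M := by
  have hr0 : 0 ≤ r := (norm_nonneg z).trans hz
  have hM0 : 0 ≤ M := (norm_nonneg _).trans (hM 0 (mem_ball_self (by linarith)))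
  have he0 : e ≠ 0 := by intro h; simp [h] at he
  obtain ⟨z', hz', hzn⟩ : ∃ z', z = e * z' ∧ ‖z'‖ = ‖z‖ :=
    ⟨z / e, by field_simp, by rw [norm_div, he, div_one]⟩
  have hlc := continuous_lap hv
  rw [ps_area hv z he hR, ps_area hv 0 he hR]
  have htr : ∫ w in ball (0:ℂ) R, lap v (z + e * w) * (w.re : ℂ) =
      ∫ w in ball z' R, lap v (e * w) * ((w - z').re : ℂ) := by
    have := (measurePreserving_add_left volume z').setIntegral_preimage_emb
      (measurableEmbedding_addLeft z') (fun w => lap v (e * w) * ((w - z').re : ℂ)) (ball z' R)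
    rw [← this]
    have hb : (fun x => z' + x) ⁻¹' ball z' R = ball (0:ℂ) R := by
      ext x; simp [dist_eq_norm]
    rw [hb]
    congr 1
    funext w
    rw [add_sub_cancel_left, mul_add, ← hz']
  simp only [zero_add]
  rw [htr]
  have hint : ∀ (h : ℂ → ℂ), Continuous h → ∀ (a : ℂ) , IntegrableOn h (ball a R) := by
    intro h hh a
    exact (hh.continuousOn.integrableOn_compact (isCompact_closedBall a R)).mono_set
      ball_subset_closedBall
  have c1 : Continuous (fun w : ℂ => lap v (e * w) * ((w - z').re : ℂ)) := by fun_prop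
  have c0 : Continuous (fun w : ℂ => lap v (e * w) * (w.re : ℂ)) := by fun_prop
  rw [← integral_inter_add_sdiff (s := ball z' R) (t := ball 0 R) measurableSet_ball (hint _ c1 z'),
    ← integral_inter_add_sdiff (s := ball 0 R) (t := ball z' R) measurableSet_ball (hint _ c0 0),
    inter_comm (ball 0 R) (ball z' R)]
  have hsub : (∫ w in ball z' R ∩ ball 0 R, lap v (e * w) * ((w - z').re : ℂ)) -
      (∫ w in ball z' R ∩ ball 0 R, lap v (e * w) * (w.re : ℂ)) =
      ∫ w in ball z' R ∩ ball 0 R, - (lap v (e * w) * (z'.re : ℂ)) := by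
    rw [← integral_sub ((hint _ c1 z').mono_set inter_subset_left)
      ((hint _ c0 z').mono_set inter_subset_left)]
    congr 1
    funext w
    rw [Complex.sub_re]; push_cast; ring
  have lapb : ∀ w : ℂ, ‖w‖ < R + r → ‖lap v (e * w)‖ ≤ M := by
    intro w hw
    apply hM
    rw [mem_ball_zero_iff, norm_mul, he, one_mul]; exact hw
  have hnt : ∀ (a : ℂ) (s : Set ℂ), s ⊆ ball a R → volume s < ⊤ := fun a s hs =>
    (measure_mono hs).trans_lt measure_ball_lt_top
  have hw1 : ∀ w ∈ ball z' R, ‖w‖ < R + r := by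
    intro w hw
    rw [mem_ball, dist_eq_norm] at hw
    have := norm_add_le (w - z') z'
    rw [sub_add_cancel] at this
    linarith
  have hw0 : ∀ w ∈ ball (0:ℂ) R, ‖w‖ < R + r := by
    intro w hw
    rw [mem_ball_zero_iff] at hw
    linarith
  have b1 : ‖∫ w in ball z' R ∩ ball 0 R, - (lap v (e * w) * (z'.re : ℂ))‖ ≤
      M * r * (Real.pi * R ^ 2) := by
    refine (norm_setIntegral_le_of_norm_le_const (C := M * r) (hnt z' _ inter_subset_left) ?_).trans ?_
    · intro w hw
      rw [norm_neg, norm_mul, Complex.norm_real]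
      exact mul_le_mul (lapb w (hw1 w hw.1)) ((Complex.abs_re_le_norm _).trans (by linarith))
        (norm_nonneg _) hM0
    · apply mul_le_mul_of_nonneg_left _ (by positivity)
      rw [← vol_ball_real z' hR.le]
      exact measureReal_mono inter_subset_left measure_ball_lt_top.ne
  have b2 : ‖∫ w in ball z' R \ ball 0 R, lap v (e * w) * ((w - z').re : ℂ)‖ ≤
      M * R * (Real.pi * (R * r)) := by
    refine (norm_setIntegral_le_of_norm_le_const (C := M * R) (hnt z' _ sdiff_subset) ?_).trans ?_
    · intro w hw
      rw [norm_mul, Complex.norm_real]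
      have := hw.1
      rw [mem_ball, dist_eq_norm] at this
      exact mul_le_mul (lapb w (hw1 w hw.1)) ((Complex.abs_re_le_norm _).trans (by linarith))
        (norm_nonneg _) hM0
    · apply mul_le_mul_of_nonneg_left _ (by positivity)
      exact ball_inter_diff _ _ (by rw [dist_zero_right]; linarith) hr hR
  have b3 : ‖∫ w in ball 0 R \ ball z' R, lap v (e * w) * (w.re : ℂ)‖ ≤
      M * R * (Real.pi * (R * r)) := by
    refine (norm_setIntegral_le_of_norm_le_const (C := M * R) (hnt 0 _ sdiff_subset) ?_).trans ?_
    · intro w hw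
      rw [norm_mul, Complex.norm_real]
      have := hw.1
      rw [mem_ball_zero_iff] at this
      exact mul_le_mul (lapb w (hw0 w hw.1)) ((Complex.abs_re_le_norm _).trans (by linarith))
        (norm_nonneg _) hM0
    · apply mul_le_mul_of_nonneg_left _ (by positivity)
      exact ball_inter_diff _ _ (by rw [dist_zero_left]; linarith) hr hR
  rw [add_sub_add_comm, hsub]
  refine (norm_add_le _ _).trans ?_
  refine (add_le_add b1 ((norm_sub_le _ _).trans (add_le_add b2 b3))).trans ?_
  apply le_of_eq; ring

lemma two_center {v : ℂ → ℂ} (hv : ContDiff ℝ 2 v) {z e : ℂ} (he : ‖e‖ = 1) {R r M : ℝ}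
    (hz : ‖z‖ ≤ r) (hr0 : 0 < r) (hr : r ≤ R)
    (hM : ∀ w ∈ ball (0:ℂ) (R + r), ‖lap v w‖ ≤ M) :
    ‖(ph v z e R / R - ph v 0 e R / R) - (ph v z e r / r - ph v 0 e r / r)‖ ≤
      3 * Real.pi * r * M * (Real.log R - Real.log r) := by
  have hpos : ∀ x ∈ Icc r R, 0 < x := fun x hx => hr0.trans_le hx.1
  have hd : ∀ x ∈ Icc r R, HasDerivAt (fun x : ℝ => (ph v z e x / x - ph v 0 e x / x)
      - (ph v z e r / r - ph v 0 e r / r))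
      (ps v z e x / (x:ℂ) ^ 3 - ps v 0 e x / (x:ℂ) ^ 3) x := fun x hx =>
    ((A_deriv hv z e (hpos x hx)).sub (A_deriv hv 0 e (hpos x hx))).sub_const _
  have := image_norm_le_of_norm_deriv_right_le_deriv_boundary' (a := r) (b := R)
    (f := fun x : ℝ => (ph v z e x / x - ph v 0 e x / x)
      - (ph v z e r / r - ph v 0 e r / r))
    (f' := fun x : ℝ => ps v z e x / (x:ℂ) ^ 3 - ps v 0 e x / (x:ℂ) ^ 3)
    (B := fun x => 3 * Real.pi * r * M * (Real.log x - Real.log r))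
    (B' := fun x => 3 * Real.pi * r * M * x⁻¹)
    (fun x hx => (hd x hx).continuousAt.continuousWithinAt)
    (fun x hx => (hd x ⟨hx.1, hx.2.le⟩).hasDerivWithinAt)
    (by simp)
    (fun x hx => (((Real.hasDerivAt_log (hpos x hx).ne').sub_const _).const_mul
      _).continuousAt.continuousWithinAt)
    (fun x hx => (((Real.hasDerivAt_log (hpos x ⟨hx.1, hx.2.le⟩).ne').sub_const _).const_mul
      _).hasDerivWithinAt) ?_
  · exact this ⟨hr, le_rfl⟩
  · intro x hx
    have hx0 := hpos x ⟨hx.1, hx.2.le⟩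
    rw [← sub_div, norm_div, norm_pow, Complex.norm_real, Real.norm_eq_abs, abs_of_pos hx0]
    have := ps_diff hv he hz hx.1 hx0 (fun w hw => hM w (ball_subset_ball (by linarith [hx.2]) hw))
    rw [div_le_iff₀ (by positivity)]
    refine this.trans (le_of_eq ?_)
    field_simp


lemma ext_C2 {u : ℂ → ℂ} (hu : ContDiffOn ℝ 2 u (ball (0:ℂ) 1)) {ρ : ℝ} (h0 : 0 < ρ) (h1 : ρ < 1) :
    ∃ v : ℂ → ℂ, ContDiff ℝ 2 v ∧ (∀ w ∈ ball (0:ℂ) ρ, v w = u w) ∧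
      (∀ w ∈ ball (0:ℂ) ρ, fderiv ℝ v w = fderiv ℝ u w) ∧
      (∀ w ∈ ball (0:ℂ) ρ, lap v w = lap u w) := by
  let χ : ContDiffBump (0:ℂ) := ⟨ρ, (1 + ρ) / 2, h0, by linarith⟩
  have hv : ∀ w ∈ ball (0:ℂ) ρ, (fun w => χ w • u w) w = u w := by
    intro w hw
    have : χ w = 1 := χ.one_of_mem_closedBall (ball_subset_closedBall hw)
    simp [this]
  have hf : ∀ w ∈ ball (0:ℂ) ρ, fderiv ℝ (fun w => χ w • u w) w = fderiv ℝ u w := by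
    intro w hw
    apply EventuallyEq.fderiv_eq
    filter_upwards [isOpen_ball.mem_nhds hw] with y hy using hv y hy
  refine ⟨fun w => χ w • u w, ?_, hv, hf, ?_⟩
  · rw [contDiff_iff_contDiffAt]
    intro w
    by_cases hw : ‖w‖ < 1
    · exact χ.contDiffAt.smul (hu.contDiffAt (isOpen_ball.mem_nhds (by simpa using hw)))
    · have : (fun w => χ w • u w) =ᶠ[nhds w] fun _ => 0 := by
        have hm : w ∈ (closedBall (0:ℂ) ((1 + ρ) / 2))ᶜ := by
          simp only [mem_compl_iff, mem_closedBall_zero_iff]; linarith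
        filter_upwards [isClosed_closedBall.isOpen_compl.mem_nhds hm] with y hy
        have : χ y = 0 := by
          apply χ.zero_of_le_dist
          simp only [mem_compl_iff, mem_closedBall] at hy
          exact (not_le.1 hy).le
        simp [this]
      exact contDiffAt_const.congr_of_eventuallyEq this
  · intro w hw
    have hh : ∀ d : ℂ, (fun w => fderiv ℝ (fun w => χ w • u w) w d) =ᶠ[nhds w]
        (fun w => fderiv ℝ u w d) := by
      intro d
      filter_upwards [isOpen_ball.mem_nhds hw] with y hy
      rw [hf y hy]
    unfold lap
    rw [(hh 1).fderiv_eq, (hh Complex.I).fderiv_eq]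

lemma second_deriv_nonpos {k k1 : ℝ → ℝ} {a : ℝ} (hk : IsLocalMax k 0)
    (h1 : ∀ s, HasDerivAt k (k1 s) s) (h2 : HasDerivAt k1 a 0) : a ≤ 0 := by
  by_contra! ha
  have hd : deriv k = k1 := funext fun s => (h1 s).deriv
  have hmin : IsLocalMin k 0 := isLocalMin_of_deriv_deriv_pos (by rw [hd, h2.deriv]; exact ha)
    hk.deriv_eq_zero (h1 0).continuousAt
  have hc : k =ᶠ[nhds 0] fun _ => k 0 := by
    filter_upwards [hk, hmin] with s hs1 hs2 using le_antisymm hs1 hs2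
  have : deriv (deriv k) 0 = deriv (deriv fun _ : ℝ => k 0) 0 := hc.deriv.deriv_eq
  rw [hd, h2.deriv] at this
  simp at this
  linarith

lemma no_int_max {v : ℂ → ℂ} (hv : ContDiff ℝ 2 v) {α x : ℂ} {m : ℝ}
    (hmax : IsLocalMax (fun w => (α * v w).re + m * ‖w‖ ^ 2) x) :
    (α * lap v x).re + 4 * m ≤ 0 := by
  have hv1 : ContDiff ℝ 1 (fderiv ℝ v) := hv.fderiv_right (m := 1) (by norm_num)
  have key : ∀ d : ℂ, ‖d‖ = 1 → (α * D2 v x d d).re + 2 * m ≤ 0 := by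
    intro d hd
    have hsq : ∀ s : ℝ, ‖x + s * d‖ ^ 2 = ‖x‖ ^ 2 + 2 * s * (x.re * d.re + x.im * d.im) + s ^ 2 := by
      intro s
      have hd2 : d.re ^ 2 + d.im ^ 2 = 1 := by
        have := Complex.sq_norm d
        rw [hd, Complex.normSq_apply] at this; linarith
      rw [Complex.sq_norm, Complex.sq_norm, Complex.normSq_apply, Complex.normSq_apply]
      simp
      linear_combination s ^ 2 * hd2
    have hloc : IsLocalMax (fun s : ℝ => (α * v (x + s * d)).re
        + m * (‖x‖ ^ 2 + 2 * s * (x.re * d.re + x.im * d.im) + s ^ 2)) 0 := by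
      have hc : ContinuousAt (fun s : ℝ => x + s * d) 0 := by fun_prop
      have ht : Tendsto (fun s : ℝ => x + s * d) (nhds 0) (nhds x) := by
        have := hc.tendsto; simpa using this
      have := ht.eventually hmax
      filter_upwards [this] with s hs
      rw [← hsq]
      simpa using hs
    have d0 : ∀ s : ℝ, HasDerivAt (fun s : ℝ => (α * v (x + s * d)).re
        + m * (‖x‖ ^ 2 + 2 * s * (x.re * d.re + x.im * d.im) + s ^ 2))
        ((α * fderiv ℝ v (x + s * d) d).re + m * (2 * (x.re * d.re + x.im * d.im) + 2 * s)) s := by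
      intro s
      have h := ((hv.differentiable (by norm_num)) (x + s * d)).hasFDerivAt.comp_hasDerivAt s
        (hasDerivAt_line x d s)
      have h' := (Complex.reCLM.hasFDerivAt (x := α * v (x + s * d))).comp_hasDerivAt s (h.const_mul α)
      have hp : HasDerivAt (fun s : ℝ => m * (‖x‖ ^ 2 + 2 * s * (x.re * d.re + x.im * d.im) + s ^ 2))
          (m * (2 * (x.re * d.re + x.im * d.im) + 2 * s)) s := by
        have := ((((((hasDerivAt_id s).const_mul 2).mul_const
          (x.re * d.re + x.im * d.im)).const_add (‖x‖ ^ 2)).add (hasDerivAt_pow 2 s))).const_mul m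
        refine this.congr_deriv ?_
        norm_num
      exact h'.add hp
    have d1 : HasDerivAt (fun s : ℝ => (α * fderiv ℝ v (x + s * d) d).re
        + m * (2 * (x.re * d.re + x.im * d.im) + 2 * s)) ((α * D2 v x d d).re + 2 * m) 0 := by
      have h := ((hv1.differentiable (by norm_num)) (x + (0:ℝ) * d)).hasFDerivAt.comp_hasDerivAt 0
        (hasDerivAt_line x d 0)
      have h2 := h.clm_apply (hasDerivAt_const 0 d)
      have h' := (Complex.reCLM.hasFDerivAt (x := α * fderiv ℝ v (x + (0:ℝ) * d) d)).comp_hasDerivAt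
        0 (h2.const_mul α)
      have hp : HasDerivAt (fun s : ℝ => m * (2 * (x.re * d.re + x.im * d.im) + 2 * s)) (2 * m) 0 := by
        have := ((((hasDerivAt_id (0:ℝ)).const_mul 2).const_add
          (2 * (x.re * d.re + x.im * d.im)))).const_mul m
        refine this.congr_deriv ?_
        ring
      refine (h'.add hp).congr_deriv ?_
      simp [D2]
    exact second_deriv_nonpos hloc d0 d1
  have k1 := key 1 (by simp)
  have k2 := key (Complex.I * 1) (by simp)
  rw [lap_eq_D2 hv x (E := 1) (by simp), mul_add, Complex.add_re]
  linarith

lemma max_principle {u : ℂ → ℂ} (hu : ContDiffOn ℝ 2 u (ball (0:ℂ) 1))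
    (hc : ContinuousOn u (closedBall (0:ℂ) 1)) {M ε : ℝ}
    (hM : ∀ z ∈ ball (0:ℂ) 1, ‖lap u z‖ ≤ M)
    (hε : ∀ z : ℂ, ‖z‖ = 1 → ‖u z‖ ≤ ε) :
    ∀ z ∈ closedBall (0:ℂ) 1, ‖u z‖ ≤ ε + M * (1 - ‖z‖ ^ 2) / 4 := by
  intro z hz
  obtain ⟨α, hα, hαu⟩ : ∃ a : ℂ, ‖a‖ = 1 ∧ a * u z = ‖u z‖ := by
    by_cases h0 : u z = 0
    · exact ⟨1, by simp, by simp [h0]⟩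
    · exact ⟨(‖u z‖ : ℂ) / u z, by simp [h0], by field_simp⟩
  have main : ∀ δ > 0, ‖u z‖ + (M + δ) / 4 * ‖z‖ ^ 2 ≤ ε + (M + δ) / 4 := by
    intro δ hδ
    obtain ⟨x, hx, hmax⟩ := (isCompact_closedBall (0:ℂ) 1).exists_isMaxOn ⟨0, by simp⟩
      (f := fun w => (α * u w).re + (M + δ) / 4 * ‖w‖ ^ 2)
      ((Complex.continuous_re.comp_continuousOn (continuousOn_const.mul hc)).add (by fun_prop))
    have hzx : (α * u z).re + (M + δ) / 4 * ‖z‖ ^ 2 ≤ (α * u x).re + (M + δ) / 4 * ‖x‖ ^ 2 :=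
      hmax hz
    rw [hαu, Complex.ofReal_re] at hzx
    rw [mem_closedBall_zero_iff] at hx
    rcases hx.lt_or_eq with hlt | heq
    · exfalso
      obtain ⟨v, hv, hvu, -, hvl⟩ := ext_C2 hu (ρ := (1 + ‖x‖) / 2)
        (by linarith [norm_nonneg x]) (by linarith)
      have hxb : x ∈ ball (0:ℂ) ((1 + ‖x‖) / 2) := by rw [mem_ball_zero_iff]; linarith
      have hloc : IsLocalMax (fun w => (α * v w).re + (M + δ) / 4 * ‖w‖ ^ 2) x := by
        filter_upwards [isOpen_ball.mem_nhds hxb] with y hy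
        rw [hvu y hy, hvu x hxb]
        apply hmax
        rw [mem_ball_zero_iff] at hy
        rw [mem_closedBall_zero_iff]; linarith
      have h1 := no_int_max hv hloc
      rw [hvl x hxb] at h1
      have h2 := hM x (by simpa using hlt)
      have h3 : |(α * lap u x).re| ≤ M :=
        (Complex.abs_re_le_norm _).trans (by rw [norm_mul, hα, one_mul]; exact h2)
      have := (abs_le.1 h3).1
      linarith
    · have h1 := hε x heq
      have h2 : (α * u x).re ≤ ε := (Complex.re_le_norm _).trans (by rw [norm_mul, hα, one_mul]; exact h1)
      rw [heq] at hzx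
      linarith
  have hz1 : ‖z‖ ≤ 1 := by simpa using hz
  apply le_of_forall_pos_le_add
  intro δ hδ
  have := main δ hδ
  nlinarith [sq_nonneg ‖z‖]

lemma grad_bound {u : ℂ → ℂ} (hu : ContDiffOn ℝ 2 u (ball (0:ℂ) 1))
    (hc : ContinuousOn u (closedBall (0:ℂ) 1)) {M ε : ℝ} 
    (hM : ∀ z ∈ ball (0:ℂ) 1, ‖lap u z‖ ≤ M)
    (hε : ∀ z : ℂ, ‖z‖ = 1 → ‖u z‖ ≤ ε) {z e : ℂ} (hz : ‖z‖ < 1) (he : ‖e‖ = 1) :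
    ‖fderiv ℝ u z e‖ ≤ 4 / Real.pi * (10 / 9 * ε / (1 - ‖z‖)
      + M * (5 / 18 * (1 + ‖z‖) + 3 / 40 * (1 - ‖z‖))) := by
  set s := ‖z‖ with hs
  have hs0 : 0 ≤ s := norm_nonneg z
  set R := 9 / 10 * (1 - s) with hRdef
  have hR : 0 < R := by simp only [hRdef]; linarith
  obtain ⟨v, hv, hvu, hvf, hvl⟩ := ext_C2 hu (ρ := (1 + (s + R)) / 2)
        (by linarith) (by linarith)
  have hin : ∀ w ∈ closedBall z R, w ∈ ball (0:ℂ) ((1 + (s + R)) / 2) := by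
    intro w hw
    rw [mem_closedBall, dist_eq_norm] at hw
    have := norm_add_le (w - z) z
    rw [sub_add_cancel] at this
    rw [mem_ball_zero_iff]
    linarith
  have hin1 : ∀ w ∈ closedBall z R, w ∈ ball (0:ℂ) 1 := fun w hw =>
    ball_subset_ball (by linarith) (hin w hw)
  have h1 := center_est hv he hR (M := M) (fun w hw => by
    rw [hvl w (hin w hw)]; exact hM w (hin1 w hw))
  have hzz := mem_closedBall_self (x := z) hR.le
  rw [hvf z (hin z hzz)] at h1
  have hmp := max_principle hu hc hM hε
  have h2 : ‖ph v z e R‖ ≤ 4 * (ε + M * (1 - s ^ 2 - R ^ 2) / 4) := by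
    unfold ph
    apply cos_bound' (x := - (M * R / 2) * ((starRingEnd ℂ) z * e).re)
      (y := (M * R / 2) * ((starRingEnd ℂ) z * e).im)
    intro t
    have hw : z + R * EE e t ∈ closedBall z R := by
      rw [mem_closedBall, dist_eq_norm, add_sub_cancel_left, norm_line he, abs_of_pos hR]
    rw [hvu _ (hin _ hw)]
    refine (hmp _ (ball_subset_closedBall (hin1 _ hw))).trans (le_of_eq ?_)
    have he2 : e.re ^ 2 + e.im ^ 2 = 1 := by
      have := Complex.sq_norm e
      rw [he, Complex.normSq_apply] at this; linarith
    have hcs := Real.sin_sq_add_cos_sq t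
    rw [hs, Complex.sq_norm, Complex.sq_norm, Complex.normSq_apply, Complex.normSq_apply, EE,
      Complex.exp_mul_I, ← Complex.ofReal_cos, ← Complex.ofReal_sin]
    simp [-Complex.ofReal_cos, -Complex.ofReal_sin]
    linear_combination (-M * R ^ 2 / 4) * (he2 * (Real.sin t ^ 2 + Real.cos t ^ 2) + hcs)
  have h3 : ‖(Real.pi:ℂ) * fderiv ℝ u z e‖ ≤ ‖ph v z e R / R‖ + 4 * M / 3 * R := by
    have := norm_sub_norm_le ((Real.pi:ℂ) * fderiv ℝ u z e) (ph v z e R / R)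
    rw [norm_sub_rev] at this
    linarith
  rw [norm_mul, norm_div, Complex.norm_real, Complex.norm_real, Real.norm_eq_abs, Real.norm_eq_abs,
    abs_of_pos hR, abs_of_pos Real.pi_pos] at h3
  have h4 : ‖ph v z e R‖ / R ≤ 4 * (ε + M * (1 - s ^ 2 - R ^ 2) / 4) / R := by gcongr
  have h5 : Real.pi * ‖fderiv ℝ u z e‖ ≤ 4 * (10 / 9 * ε / (1 - s)
      + M * (5 / 18 * (1 + s) + 3 / 40 * (1 - s))) := by
    refine h3.trans ((add_le_add h4 le_rfl).trans (le_of_eq ?_))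
    have : 1 - s ≠ 0 := by linarith
    rw [hRdef]
    field_simp
    ring
  have hpi := Real.pi_pos
  rw [div_mul_eq_mul_div, le_div_iff₀ hpi]
  linarith


lemma diff_bound {u : ℂ → ℂ} (hu : ContDiffOn ℝ 2 u (ball (0:ℂ) 1))
    (hc : ContinuousOn u (closedBall (0:ℂ) 1)) {M ε : ℝ}
    (hM : ∀ z ∈ ball (0:ℂ) 1, ‖lap u z‖ ≤ M)
    (hε : ∀ z : ℂ, ‖z‖ = 1 → ‖u z‖ ≤ ε) {z e : ℂ} {r : ℝ} (hz : ‖z‖ ≤ r) (hr0 : 0 < r)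
    (hr : r < 1 / 2) (he : ‖e‖ = 1) :
    Real.pi * ‖fderiv ℝ u z e - fderiv ℝ u 0 e‖ ≤ 2 * (4 * M / 3 * r)
      + 3 * Real.pi * r * M * (Real.log (1 / 2) - Real.log r)
      + 8 * r * (4 / Real.pi * (10 / 9 * ε / (1 / 2 - r) + 5 / 9 * M)) := by
  have hM0 : 0 ≤ M := (norm_nonneg _).trans (hM 0 (by simp))
  have hε0 : 0 ≤ ε := (norm_nonneg _).trans (hε 1 (by simp))
  have hpi := Real.pi_pos
  set K := 4 / Real.pi * (10 / 9 * ε / (1 / 2 - r) + 5 / 9 * M) with hK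
  have h12 : 0 < 1 / 2 - r := by linarith
  have hK0 : 0 ≤ K := by positivity
  set ρ := (1 + (1 / 2 + r)) / 2 with hρ
  obtain ⟨v, hv, hvu, hvf, hvl⟩ := ext_C2 hu (ρ := ρ) (by linarith) (by linarith)
  have hin1 : ∀ w ∈ ball (0:ℂ) ρ, w ∈ ball (0:ℂ) 1 := fun w hw =>
    ball_subset_ball (by linarith) hw
  have hvM : ∀ w ∈ ball (0:ℂ) ρ, ‖lap v w‖ ≤ M := fun w hw => by
    rw [hvl w hw]; exact hM w (hin1 w hw)
  -- gradient bound
  have hgr : ∀ w ∈ closedBall (0:ℂ) (1 / 2 + r), ‖fderiv ℝ v w‖ ≤ K := by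
    intro w hw
    rw [mem_closedBall_zero_iff] at hw
    have hwρ : w ∈ ball (0:ℂ) ρ := by rw [mem_ball_zero_iff]; linarith
    rw [hvf w hwρ]
    refine ContinuousLinearMap.opNorm_le_of_unit_norm hK0 fun x hx => ?_
    have := grad_bound hu hc hM hε (z := w) (by linarith) hx
    refine this.trans ?_
    rw [hK]
    have h0 := norm_nonneg w
    have e1 : 10 / 9 * ε / (1 - ‖w‖) ≤ 10 / 9 * ε / (1 / 2 - r) := by
      apply div_le_div_of_nonneg_left (by positivity) h12; linarith
    have e2 : M * (5 / 18 * (1 + ‖w‖) + 3 / 40 * (1 - ‖w‖)) ≤ 5 / 9 * M := by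
      rw [mul_comm]; apply mul_le_mul_of_nonneg_right _ hM0; linarith
    gcongr
  have hlip : ∀ t : ℝ, ‖v (z + ((1/2:ℝ):ℂ) * EE e t) - v (0 + ((1/2:ℝ):ℂ) * EE e t)‖ ≤ K * r := by
    intro t
    have hn : ‖((1/2:ℝ):ℂ) * EE e t‖ = 1 / 2 := by
      rw [norm_line he, abs_of_pos (by norm_num)]
    have := (convex_closedBall (0:ℂ) (1 / 2 + r)).norm_image_sub_le_of_norm_fderiv_le (𝕜 := ℝ)
      (f := v) (fun x _ => (hv.differentiable (by norm_num)) x) hgr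
      (x := 0 + ((1/2:ℝ):ℂ) * EE e t) (y := z + ((1/2:ℝ):ℂ) * EE e t)
      (by rw [zero_add, mem_closedBall_zero_iff, hn]; linarith)
      (by rw [mem_closedBall_zero_iff]; exact (norm_add_le _ _).trans (by rw [hn]; linarith))
    refine this.trans ?_
    rw [add_sub_add_right_eq_sub, sub_zero]
    gcongr
  have hA : ‖ph v z e (1/2:ℝ) / ((1/2:ℝ):ℂ) - ph v 0 e (1/2:ℝ) / ((1/2:ℝ):ℂ)‖ ≤ 8 * r * K := by
    have h1 : ph v z e (1/2:ℝ) - ph v 0 e (1/2:ℝ) = ∫ t in (-Real.pi)..Real.pi,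
        (v (z + ((1/2:ℝ):ℂ) * EE e t) - v (0 + ((1/2:ℝ):ℂ) * EE e t)) * (Real.cos t : ℂ) := by
      unfold ph
      have hvc := hv.continuous
      have hE := continuous_EE e
      rw [← intervalIntegral.integral_sub]
      · congr 1; ext t; ring
      · apply Continuous.intervalIntegrable; fun_prop
      · apply Continuous.intervalIntegrable; fun_prop
    rw [← sub_div, norm_div, h1, Complex.norm_real]
    have := cos_bound hlip
    rw [div_le_iff₀ (by norm_num)]
    norm_num at this ⊢
    linarith
  have hB := two_center hv he hz hr0 hr.le (M := M) (fun w hw =>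
    hvM w (ball_subset_ball (by linarith) hw))
  have hC := center_est hv (c := z) he hr0 (M := M) (fun w hw => by
    apply hvM
    rw [mem_closedBall, dist_eq_norm] at hw
    have := norm_add_le (w - z) z
    rw [sub_add_cancel] at this
    rw [mem_ball_zero_iff]
    linarith)
  have hD := center_est hv (c := 0) he hr0 (M := M) (fun w hw => by
    apply hvM
    rw [mem_closedBall_zero_iff] at hw
    rw [mem_ball_zero_iff]
    linarith)
  rw [hvf z (by rw [mem_ball_zero_iff]; linarith)] at hC
  rw [hvf 0 (by rw [mem_ball_zero_iff, norm_zero]; linarith)] at hD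
  have e1 : Real.pi * ‖fderiv ℝ u z e - fderiv ℝ u 0 e‖
      = ‖(Real.pi:ℂ) * fderiv ℝ u z e - Real.pi * fderiv ℝ u 0 e‖ := by
    rw [← mul_sub, norm_mul, Complex.norm_real, Real.norm_eq_abs, abs_of_pos hpi]
  rw [e1]
  set a := ph v z e (1/2:ℝ) / ((1/2:ℝ):ℂ) - ph v 0 e (1/2:ℝ) / ((1/2:ℝ):ℂ)
  set b := ph v z e r / r
  set b' := ph v 0 e r / r
  set p := (Real.pi:ℂ) * fderiv ℝ u z e
  set q := (Real.pi:ℂ) * fderiv ℝ u 0 e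
  have : p - q = a - (a - (b - b')) - (b - p) + (b' - q) := by ring
  rw [this]
  have n1 := norm_add_le (a - (a - (b - b')) - (b - p)) (b' - q)
  have n2 := norm_sub_le (a - (a - (b - b'))) (b - p)
  have n3 := norm_sub_le a (a - (b - b'))
  linarith

lemma zero_est {u : ℂ → ℂ} (hu : ContDiffOn ℝ 2 u (ball (0:ℂ) 1))
    (hc : ContinuousOn u (closedBall (0:ℂ) 1)) {M : ℝ}
    (hM : ∀ z ∈ ball (0:ℂ) 1, ‖lap u z‖ ≤ M) {e : ℂ} (he : ‖e‖ = 1) :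
    ‖(∫ t in (-Real.pi)..Real.pi, u (EE e t) * (Real.cos t : ℂ)) - Real.pi * fderiv ℝ u 0 e‖
      ≤ 4 * M / 3 := by
  set c : ℂ → ℂ := fun w => ((max 1 ‖w‖)⁻¹ : ℝ) • w with hcdef
  have hpos : ∀ w : ℂ, 0 < max 1 ‖w‖ := fun w => lt_max_of_lt_left one_pos
  have hcc : Continuous c := by
    refine Continuous.smul (Continuous.inv₀ (by fun_prop) fun w => (hpos w).ne') continuous_id
  have hcm : ∀ w, c w ∈ closedBall (0:ℂ) 1 := by
    intro w
    rw [mem_closedBall_zero_iff, hcdef]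
    simp only [norm_smul, norm_inv, Real.norm_eq_abs, abs_of_pos (hpos w)]
    rw [inv_mul_le_iff₀ (hpos w), mul_one]
    exact le_max_right _ _
  have hcid : ∀ w ∈ closedBall (0:ℂ) 1, c w = w := by
    intro w hw
    rw [mem_closedBall_zero_iff] at hw
    simp [hcdef, max_eq_left hw]
  have hU : Continuous (fun w => u (c w)) := hc.comp_continuous hcc hcm
  set U : ℂ → ℂ := fun w => u (c w) with hUdef
  have hUu : ∀ w ∈ closedBall (0:ℂ) 1, U w = u w := fun w hw => by rw [hUdef]; simp only; rw [hcid w hw]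
  have hE := continuous_EE e
  have hcont : Continuous (fun R : ℝ => ph U 0 e R) := by
    unfold ph
    apply intervalIntegral.continuous_parametric_intervalIntegral_of_continuous' 
    fun_prop
  have key : ∀ R ∈ Ioo (0:ℝ) 1, ‖ph U 0 e R / R - Real.pi * fderiv ℝ u 0 e‖ ≤ 4 * M / 3 * R := by
    rintro R ⟨hR0, hR1⟩
    obtain ⟨v, hv, hvu, hvf, hvl⟩ := ext_C2 hu (ρ := (1 + R) / 2) (by linarith) (by linarith)
    have hin : ∀ w ∈ closedBall (0:ℂ) R, w ∈ ball (0:ℂ) ((1 + R) / 2) := by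
      intro w hw
      rw [mem_closedBall_zero_iff] at hw
      rw [mem_ball_zero_iff]; linarith
    have := center_est hv (c := 0) he hR0 (M := M) (fun w hw => by
      rw [hvl w (hin w hw)]
      exact hM w (ball_subset_ball (by linarith) (hin w hw)))
    rw [hvf 0 (by simp; linarith)] at this
    have hph : ph v 0 e R = ph U 0 e R := by
      unfold ph
      congr 1; ext t
      have hm : 0 + (R:ℂ) * EE e t ∈ closedBall (0:ℂ) R := by
        rw [zero_add, mem_closedBall_zero_iff, norm_line he, abs_of_pos hR0]
      rw [hvu _ (hin _ hm), hUu _ (closedBall_subset_closedBall hR1.le hm)]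
    rwa [hph] at this
  have hph1 : ph U 0 e 1 = ∫ t in (-Real.pi)..Real.pi, u (EE e t) * (Real.cos t : ℂ) := by
    unfold ph
    congr 1; ext t
    rw [hUu]
    · simp
    · rw [zero_add, mem_closedBall_zero_iff, norm_line he]; simp
  rw [← hph1]
  have hl : Tendsto (fun R : ℝ => ‖ph U 0 e R / R - Real.pi * fderiv ℝ u 0 e‖)
      (nhdsWithin 1 (Ioo 0 1)) (nhds ‖ph U 0 e (1:ℝ) / ((1:ℝ):ℂ) - Real.pi * fderiv ℝ u 0 e‖) := by
    have : ContinuousAt (fun R : ℝ => ‖ph U 0 e R / R - Real.pi * fderiv ℝ u 0 e‖) 1 := by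
      refine ContinuousAt.norm (ContinuousAt.sub (ContinuousAt.div hcont.continuousAt
        (by fun_prop) (by simp)) continuousAt_const)
    exact this.tendsto.mono_left nhdsWithin_le_nhds
  have hr : Tendsto (fun R : ℝ => 4 * M / 3 * R)
      (nhdsWithin 1 (Ioo 0 1)) (nhds (4 * M / 3 * 1)) :=
    (by fun_prop : Continuous (fun R : ℝ => 4 * M / 3 * R)).continuousAt.tendsto.mono_left
      nhdsWithin_le_nhds
  have : (nhdsWithin (1:ℝ) (Ioo 0 1)).NeBot := right_nhdsWithin_Ioo_neBot one_pos
  have := le_of_tendsto_of_tendsto hl hr (eventually_mem_nhdsWithin.mono key)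
  simpa using this

/-- harmonic function from two holomorphic ones -/
def HH (F G : ℂ → ℂ) (w : ℂ) : ℂ := F w + (starRingEnd ℂ) (G w)

lemma HH_fderiv {F G : ℂ → ℂ} {F' G' z : ℂ} (hF : HasDerivAt F F' z) (hG : HasDerivAt G G' z) :
    DifferentiableAt ℝ (HH F G) z ∧
      ∀ e, fderiv ℝ (HH F G) z e = F' * e + (starRingEnd ℂ) (G' * e) := by
  have h1 := hF.hasFDerivAt.restrictScalars ℝ
  have h2 := hG.hasFDerivAt.restrictScalars ℝ
  have h3 := (Complex.conjCLE.toContinuousLinearMap.hasFDerivAt (x := G z)).comp z h2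
  have h4 := h1.add h3
  have h5 : HasFDerivAt (HH F G) _ z := h4
  refine ⟨h5.differentiableAt, fun e => ?_⟩
  rw [h5.fderiv]
  simp [mul_comm]

lemma HH_contDiffOn {F G : ℂ → ℂ} (hF : DifferentiableOn ℂ F (ball (0:ℂ) 1))
    (hG : DifferentiableOn ℂ G (ball (0:ℂ) 1)) : ContDiffOn ℝ 2 (HH F G) (ball (0:ℂ) 1) := by
  have h1 : ContDiffOn ℝ 2 F (ball (0:ℂ) 1) := (hF.contDiffOn (n := 2) isOpen_ball).restrict_scalars ℝ
  have h2 : ContDiffOn ℝ 2 G (ball (0:ℂ) 1) := (hG.contDiffOn (n := 2) isOpen_ball).restrict_scalars ℝ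
  exact h1.add (Complex.conjCLE.toContinuousLinearMap.contDiff.comp_contDiffOn h2)

lemma HH_lap {F G : ℂ → ℂ} (hF : DifferentiableOn ℂ F (ball (0:ℂ) 1))
    (hG : DifferentiableOn ℂ G (ball (0:ℂ) 1)) {z : ℂ} (hz : z ∈ ball (0:ℂ) 1) :
    lap (HH F G) z = 0 := by
  have hd : ∀ {F : ℂ → ℂ}, DifferentiableOn ℂ F (ball (0:ℂ) 1) → ∀ w ∈ ball (0:ℂ) 1,
      HasDerivAt F (deriv F w) w := fun h w hw =>
    (h.differentiableAt (isOpen_ball.mem_nhds hw)).hasDerivAt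
  have hF' := hF.deriv isOpen_ball
  have hG' := hG.deriv isOpen_ball
  have ev : ∀ d : ℂ, (fun w => fderiv ℝ (HH F G) w d) =ᶠ[nhds z]
      HH (fun w => deriv F w * d) (fun w => deriv G w * d) := by
    intro d
    filter_upwards [isOpen_ball.mem_nhds hz] with w hw
    rw [(HH_fderiv (hd hF w hw) (hd hG w hw)).2 d]; rfl
  unfold lap
  rw [(ev 1).fderiv_eq, (ev Complex.I).fderiv_eq,
    (HH_fderiv ((hd hF' z hz).mul_const 1) ((hd hG' z hz).mul_const 1)).2,
    (HH_fderiv ((hd hF' z hz).mul_const Complex.I) ((hd hG' z hz).mul_const Complex.I)).2]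
  simp only [map_mul, Complex.conj_I, map_one]
  linear_combination (deriv (deriv F) z + (starRingEnd ℂ) (deriv (deriv G) z)) * Complex.I_mul_I

lemma HH_zero {F G : ℂ → ℂ} (hF : DifferentiableOn ℂ F (ball (0:ℂ) 1))
    (hG : DifferentiableOn ℂ G (ball (0:ℂ) 1))
    (hFc : ContinuousOn F (closedBall (0:ℂ) 1)) (hGc : ContinuousOn G (closedBall (0:ℂ) 1))
    {N : ℝ} (hN : ∀ w : ℂ, ‖w‖ = 1 → ‖HH F G w‖ ≤ N) {e : ℂ} (he : ‖e‖ = 1) :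
    ‖deriv F 0 * e + (starRingEnd ℂ) (deriv G 0 * e)‖ ≤ 4 / Real.pi * N := by
  have h0 : (0:ℂ) ∈ ball (0:ℂ) 1 := by simp
  have hc : ContinuousOn (HH F G) (closedBall (0:ℂ) 1) :=
    hFc.add (Complex.continuous_conj.comp_continuousOn hGc)
  have := zero_est (HH_contDiffOn hF hG) hc (M := 0) (fun z hz => by rw [HH_lap hF hG hz]; simp) he
  have hz : ‖(∫ t in (-Real.pi)..Real.pi, HH F G (EE e t) * (Real.cos t : ℂ))
      - Real.pi * fderiv ℝ (HH F G) 0 e‖ ≤ 0 := by simpa using this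
  have heq := sub_eq_zero.1 (norm_le_zero_iff.1 hz)
  have hb := cos_bound (F := fun t => HH F G (EE e t)) (M := N) (fun t => hN _ (norm_EE he t))
  rw [heq, norm_mul, Complex.norm_real, Real.norm_eq_abs, abs_of_pos Real.pi_pos,
    (HH_fderiv ((hF.differentiableAt (isOpen_ball.mem_nhds h0)).hasDerivAt)
      ((hG.differentiableAt (isOpen_ball.mem_nhds h0)).hasDerivAt)).2] at hb
  rw [div_mul_eq_mul_div, le_div_iff₀ Real.pi_pos]
  linarith

/-- Bound (A) via a Moebius map -/
lemma HH_grad {F G : ℂ → ℂ} (hF : Differentiable ℂ F) (hG : Differentiable ℂ G)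
    {N : ℝ} (hN : ∀ w : ℂ, ‖w‖ = 1 → ‖HH F G w‖ ≤ N) {z e : ℂ} (hz : ‖z‖ < 1) (he : ‖e‖ = 1) :
    ‖fderiv ℝ (HH F G) z e‖ ≤ 4 / Real.pi * N / (1 - ‖z‖ ^ 2) := by
  set φ : ℂ → ℂ := fun w => (w + z) / (1 + (starRingEnd ℂ) z * w) with hφ
  have hne : ∀ w ∈ closedBall (0:ℂ) 1, 1 + (starRingEnd ℂ) z * w ≠ 0 := by
    intro w hw h
    rw [mem_closedBall_zero_iff] at hw
    have h1 : (starRingEnd ℂ) z * w = -1 := by linear_combination h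
    have h2 : ‖z‖ * ‖w‖ = 1 := by
      have := congrArg norm h1
      simpa using this
    nlinarith [norm_nonneg z, norm_nonneg w]
  have hφd : ∀ w ∈ closedBall (0:ℂ) 1, DifferentiableAt ℂ φ w := fun w hw =>
    DifferentiableAt.div (by fun_prop) (by fun_prop) (hne w hw)
  have hφ1 : ∀ w : ℂ, ‖w‖ = 1 → ‖φ w‖ = 1 := by
    intro w hw
    have hw' := hne w (by rw [mem_closedBall_zero_iff, hw])
    have hww : w * (starRingEnd ℂ) w = 1 := by
      rw [Complex.mul_conj, Complex.normSq_eq_norm_sq, hw]; simp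
    have : w + z = w * (starRingEnd ℂ) (1 + (starRingEnd ℂ) z * w) := by
      simp only [map_add, map_one, map_mul, Complex.conj_conj]
      linear_combination (-z) * hww
    rw [hφ]; simp only
    rw [norm_div, this, norm_mul, RCLike.norm_conj, hw, one_mul, div_self (norm_ne_zero_iff.2 hw')]
  have hsub : ball (0:ℂ) 1 ⊆ closedBall (0:ℂ) 1 := ball_subset_closedBall
  have hφ0 : φ 0 = z := by simp [hφ]
  have hφ' : HasDerivAt φ (1 - ‖z‖ ^ 2 : ℝ) 0 := by
    have h1 : HasDerivAt (fun w : ℂ => w + z) 1 0 := (hasDerivAt_id 0).add_const z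
    have h2 : HasDerivAt (fun w : ℂ => 1 + (starRingEnd ℂ) z * w) ((starRingEnd ℂ) z * 1) 0 :=
      ((hasDerivAt_id (0:ℂ)).const_mul _).const_add 1
    have h3 := h1.div h2 (by simp)
    have e : (((1 - ‖z‖ ^ 2 : ℝ)) : ℂ) = (1 * (1 + (starRingEnd ℂ) z * 0) - (0 + z) * ((starRingEnd ℂ) z * 1)) / (1 + (starRingEnd ℂ) z * 0) ^ 2 := by
      push_cast
      rw [← Complex.mul_conj']
      simp
    rw [e]; exact h3
  have hdc : ∀ {F : ℂ → ℂ}, Differentiable ℂ F → ∀ w ∈ closedBall (0:ℂ) 1,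
      DifferentiableAt ℂ (fun w => F (φ w)) w := fun h w hw => (h (φ w)).comp w (hφd w hw)
  have hder : ∀ {F : ℂ → ℂ}, Differentiable ℂ F →
      deriv (fun w => F (φ w)) 0 = deriv F z * (1 - ‖z‖ ^ 2 : ℝ) := by
    intro F h
    have h1 : HasDerivAt F (deriv F z) (φ 0) := by rw [hφ0]; exact (h z).hasDerivAt
    exact (h1.comp 0 hφ').deriv
  have := HH_zero (F := fun w => F (φ w)) (G := fun w => G (φ w)) (N := N)
    (fun w hw => (hdc hF w (hsub hw)).differentiableWithinAt)
    (fun w hw => (hdc hG w (hsub hw)).differentiableWithinAt)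
    (fun w hw => (hdc hF w hw).continuousAt.continuousWithinAt)
    (fun w hw => (hdc hG w hw).continuousAt.continuousWithinAt)
    (fun w hw => hN _ (hφ1 w hw)) he
  rw [hder hF, hder hG] at this
  rw [(HH_fderiv (hF z).hasDerivAt (hG z).hasDerivAt).2]
  have hp : 0 < 1 - ‖z‖ ^ 2 := by nlinarith [norm_nonneg z]
  rw [le_div_iff₀ hp]
  refine le_trans (le_of_eq ?_) this
  have : deriv F z * (1 - ‖z‖ ^ 2 : ℝ) * e + (starRingEnd ℂ) (deriv G z * (1 - ‖z‖ ^ 2 : ℝ) * e)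
      = (deriv F z * e + (starRingEnd ℂ) (deriv G z * e)) * (1 - ‖z‖ ^ 2 : ℝ) := by
    simp only [map_mul, Complex.conj_ofReal]
    ring
  rw [this, norm_mul _ (((1 - ‖z‖ ^ 2 : ℝ)) : ℂ), Complex.norm_real, Real.norm_eq_abs, abs_of_pos hp]

open Real in
lemma abscosn_int {n : ℕ} (hn : 1 ≤ n) : ∫ t in (-π)..π, |cos (n * t)| = 4 := by
  have hn0 : (n:ℝ) ≠ 0 := by positivity
  rw [intervalIntegral.integral_comp_mul_left (fun t => |cos t|) hn0]
  have hp : Function.Periodic (fun t => |cos t|) (2 * π) := fun t => by simp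
  have h1 := hp.intervalIntegral_add_zsmul_eq n (n * -π)
    (fun a b => (by fun_prop : Continuous (fun t => |cos t|)).intervalIntegrable a b)
  have h2 := hp.intervalIntegral_add_eq (0) (-π)
  have e1 : (n:ℝ) * -π + (n:ℤ) • (2 * π) = n * π := by simp; ring
  have e2 : -π + 2 * π = π := by ring
  rw [e2, abscos_int'] at h2
  rw [e1, hp.intervalIntegral_add_eq (n * -π) 0, h2] at h1
  rw [h1]
  simp [hn0]

open Real in
lemma cosn_bound {F : ℝ → ℂ} {M : ℝ} {n : ℕ} (hn : 1 ≤ n) (h : ∀ t, ‖F t‖ ≤ M) :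
    ‖∫ t in (-π)..π, F t * (cos (n * t) : ℂ)‖ ≤ 4 * M := by
  have : ∫ t in (-π)..π, M * |cos (n * t)| = 4 * M := by
    rw [intervalIntegral.integral_const_mul, abscosn_int hn]; ring
  rw [← this]
  apply intervalIntegral.norm_integral_le_of_norm_le (by linarith [pi_pos])
  · filter_upwards with t _
    rw [norm_mul, Complex.norm_real, Real.norm_eq_abs]
    exact mul_le_mul_of_nonneg_right (h t) (abs_nonneg _)
  · apply Continuous.intervalIntegrable; fun_prop

lemma int_exp_int (k : ℤ) : ∫ t in (-Real.pi)..Real.pi, Complex.exp ((k * Complex.I) * t)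
    = if k = 0 then 2 * (Real.pi : ℂ) else 0 := by
  split_ifs with hk
  · subst hk; simp; ring
  · rw [integral_exp_mul_complex (by simp [hk])]
    have : Complex.exp (k * Complex.I * (Real.pi:ℝ)) = Complex.exp (k * Complex.I * ((-Real.pi : ℝ))) := by
      rw [Complex.exp_eq_exp_iff_exists_int]
      exact ⟨k, by push_cast; ring⟩
    rw [this, sub_self, zero_div]

lemma int_mono {n m : ℕ} (hn : 1 ≤ n) (e : ℂ) :
    ∫ t in (-Real.pi)..Real.pi, (EE e t) ^ m * (Real.cos (n * t) : ℂ)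
    = if m = n then Real.pi * e ^ m else 0 := by
  have h : ∀ t : ℝ, (EE e t) ^ m * (Real.cos (n * t) : ℂ) =
      e ^ m / 2 * Complex.exp ((((m:ℤ) + (n:ℤ) : ℤ) * Complex.I) * t)
      + e ^ m / 2 * Complex.exp ((((m:ℤ) - (n:ℤ) : ℤ) * Complex.I) * t) := by
    intro t
    unfold EE
    rw [Complex.ofReal_cos, Complex.cos, mul_pow, ← Complex.exp_nat_mul]
    have e1 : Complex.exp ((((m:ℤ) + (n:ℤ) : ℤ) * Complex.I) * t) =
      Complex.exp (m * (t * Complex.I)) * Complex.exp (((n * t : ℝ):ℂ) * Complex.I) := by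
      rw [← Complex.exp_add]; congr 1; push_cast; ring
    have e2 : Complex.exp ((((m:ℤ) - (n:ℤ) : ℤ) * Complex.I) * t) =
      Complex.exp (m * (t * Complex.I)) * Complex.exp (-((n * t : ℝ):ℂ) * Complex.I) := by
      rw [← Complex.exp_add]; congr 1; push_cast; ring
    rw [e1, e2]; ring
  simp_rw [h]
  rw [intervalIntegral.integral_add, intervalIntegral.integral_const_mul,
    intervalIntegral.integral_const_mul, int_exp_int, int_exp_int, if_neg (by omega)]
  · by_cases hmn : m = n
    · rw [if_pos (by omega), if_pos hmn]; ring
    · rw [if_neg (by omega), if_neg hmn]; ring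
  · apply Continuous.intervalIntegrable; fun_prop
  · apply Continuous.intervalIntegrable; fun_prop

lemma int_poly (A : Polynomial ℂ) {n : ℕ} (hn : 1 ≤ n) (e : ℂ) :
    ∫ t in (-Real.pi)..Real.pi, A.eval (EE e t) * (Real.cos (n * t) : ℂ)
    = Real.pi * (A.coeff n * e ^ n) := by
  have hE := continuous_EE e
  induction A using Polynomial.induction_on' with
  | add p q hp hq =>
    simp only [Polynomial.eval_add, add_mul, Polynomial.coeff_add]
    rw [intervalIntegral.integral_add, hp, hq]
    · ring
    · apply Continuous.intervalIntegrable
      have := p.continuous.comp hE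
      exact Continuous.mul this (by fun_prop)
    · apply Continuous.intervalIntegrable
      have := q.continuous.comp hE
      exact Continuous.mul this (by fun_prop)
  | monomial m c =>
    simp only [Polynomial.eval_monomial, Polynomial.coeff_monomial, mul_assoc]
    rw [intervalIntegral.integral_const_mul, int_mono hn]
    split_ifs with h
    · subst h; ring
    · simp

lemma coeff_bound (A B : Polynomial ℂ) {N : ℝ}
    (hN : ∀ w : ℂ, ‖w‖ = 1 → ‖HH A.eval B.eval w‖ ≤ N) {n : ℕ} (hn : 1 ≤ n) (ζ : ℂ) :
    ‖A.coeff n * ζ + (starRingEnd ℂ) (B.coeff n * ζ)‖ ≤ 4 / Real.pi * N * ‖ζ‖ := by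
  -- unit case
  have unit : ∀ e : ℂ, ‖e‖ = 1 →
      ‖A.coeff n * e ^ n + (starRingEnd ℂ) (B.coeff n * e ^ n)‖ ≤ 4 / Real.pi * N := by
    intro e he
    have hE := continuous_EE e
    have hb := cosn_bound (F := fun t => HH A.eval B.eval (EE e t)) (M := N) hn
      (fun t => hN _ (norm_EE he t))
    have hi : ∫ t in (-Real.pi)..Real.pi, HH A.eval B.eval (EE e t) * (Real.cos (n * t) : ℂ)
        = Real.pi * (A.coeff n * e ^ n + (starRingEnd ℂ) (B.coeff n * e ^ n)) := by
      have h : ∀ t : ℝ, HH A.eval B.eval (EE e t) * (Real.cos (n * t) : ℂ) =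
          A.eval (EE e t) * (Real.cos (n * t) : ℂ) +
          (starRingEnd ℂ) (B.eval (EE e t) * (Real.cos (n * t) : ℂ)) := by
        intro t
        simp only [HH, map_mul, Complex.conj_ofReal]; ring
      simp_rw [h]
      rw [intervalIntegral.integral_add, int_poly A hn, intervalIntegral.integral_of_le
        (by linarith [Real.pi_pos]), integral_conj, ← intervalIntegral.integral_of_le
        (by linarith [Real.pi_pos]), int_poly B hn]
      · simp only [map_mul, Complex.conj_ofReal]; ring
      · apply Continuous.intervalIntegrable
        have := A.continuous.comp hE
        exact Continuous.mul this (by fun_prop)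
      · apply Continuous.intervalIntegrable
        have := B.continuous.comp hE
        exact Complex.continuous_conj.comp (Continuous.mul this (by fun_prop))
    rw [hi, norm_mul, Complex.norm_real, Real.norm_eq_abs, abs_of_pos Real.pi_pos] at hb
    rw [div_mul_eq_mul_div, le_div_iff₀ Real.pi_pos]
    linarith
  by_cases h0 : ζ = 0
  · simp [h0]
  have hz : 0 < ‖ζ‖ := norm_pos_iff.2 h0
  obtain ⟨e, he⟩ := IsAlgClosed.exists_pow_nat_eq (ζ / ‖ζ‖) (show 0 < n by omega)
  have he1 : ‖e‖ = 1 := by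
    have : ‖e‖ ^ n = 1 := by rw [← norm_pow, he]; simp [h0]
    exact (pow_eq_one_iff_of_nonneg (norm_nonneg _) (by omega)).1 this
  have := unit e he1
  rw [he] at this
  have e2 : A.coeff n * ζ + (starRingEnd ℂ) (B.coeff n * ζ) =
      (A.coeff n * (ζ / ‖ζ‖) + (starRingEnd ℂ) (B.coeff n * (ζ / ‖ζ‖))) * (‖ζ‖:ℂ) := by
    have : (‖ζ‖:ℂ) ≠ 0 := by exact_mod_cast hz.ne'
    simp only [map_mul, map_div₀, Complex.conj_ofReal]
    field_simp
  rw [e2, norm_mul, Complex.norm_real, norm_norm]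
  gcongr

lemma geom_sum_bound {r : ℝ} (h0 : 0 ≤ r) (h1 : r < 1) (D : ℕ) :
    ∑ n ∈ Finset.range D, ((n:ℝ) + 1 + 1) * r ^ (n + 1) ≤ r * (2 - r) / (1 - r) ^ 2 := by
  have key : (∑ n ∈ Finset.range D, ((n:ℝ) + 1 + 1) * r ^ (n + 1)) * (1 - r) ^ 2
      = r * (2 - r) - (D + 2) * r ^ (D + 1) + (D + 1) * r ^ (D + 2) := by
    induction D with
    | zero => simp; ring
    | succ D ih => rw [Finset.sum_range_succ, add_mul, ih]; push_cast; ring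
  have hp : 0 < (1 - r) ^ 2 := by have : 0 < 1 - r := by linarith
                                  positivity
  rw [le_div_iff₀ hp, key]
  have : (D + 1) * r ^ (D + 2) ≤ ((D:ℝ) + 2) * r ^ (D + 1) := by
    have : r ^ (D + 2) ≤ r ^ (D + 1) := pow_le_pow_of_le_one h0 h1.le (by omega)
    have h3 : 0 ≤ r ^ (D + 1) := by positivity
    nlinarith
  linarith

lemma poly_deriv_eval (A : Polynomial ℂ) (D : ℕ) (hD : A.natDegree ≤ D) (z : ℂ) :
    A.derivative.eval z = A.coeff 1 +
      ∑ n ∈ Finset.range D, A.coeff (n + 2) * (((n:ℂ) + 1 + 1) * z ^ (n + 1)) := by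
  rw [Polynomial.eval_eq_sum_range' (n := D + 1)
    (lt_of_le_of_lt (Polynomial.natDegree_derivative_le A) (by omega)), Finset.sum_range_succ']
  simp only [Polynomial.coeff_derivative]
  rw [add_comm]
  congr 1
  · simp
  · apply Finset.sum_congr rfl
    intro n _
    push_cast
    ring

lemma HH_diff (A B : Polynomial ℂ) {N : ℝ}
    (hN : ∀ w : ℂ, ‖w‖ = 1 → ‖HH A.eval B.eval w‖ ≤ N) {z e : ℂ} {r : ℝ}
    (hz : ‖z‖ ≤ r) (h0 : 0 ≤ r) (h1 : r < 1) (he : ‖e‖ = 1) :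
    ‖fderiv ℝ (HH A.eval B.eval) z e - fderiv ℝ (HH A.eval B.eval) 0 e‖ ≤
      4 / Real.pi * N * (r * (2 - r) / (1 - r) ^ 2) := by
  have hN0 : 0 ≤ N := (norm_nonneg _).trans (hN 1 (by simp))
  have hpi := Real.pi_pos
  rw [(HH_fderiv (A.hasDerivAt z) (B.hasDerivAt z)).2, (HH_fderiv (A.hasDerivAt 0) (B.hasDerivAt 0)).2]
  set D := max A.natDegree B.natDegree
  rw [poly_deriv_eval A D (le_max_left _ _) z, poly_deriv_eval B D (le_max_right _ _) z,
    poly_deriv_eval A D (le_max_left _ _) 0, poly_deriv_eval B D (le_max_right _ _) 0]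
  have e1 : (A.coeff 1 + ∑ n ∈ Finset.range D, A.coeff (n + 2) * (((n:ℂ) + 1 + 1) * z ^ (n + 1))) * e
      + (starRingEnd ℂ) ((B.coeff 1 + ∑ n ∈ Finset.range D, B.coeff (n + 2) * (((n:ℂ) + 1 + 1) * z ^ (n + 1))) * e)
      - ((A.coeff 1 + ∑ n ∈ Finset.range D, A.coeff (n + 2) * (((n:ℂ) + 1 + 1) * 0 ^ (n + 1))) * e
      + (starRingEnd ℂ) ((B.coeff 1 + ∑ n ∈ Finset.range D, B.coeff (n + 2) * (((n:ℂ) + 1 + 1) * 0 ^ (n + 1))) * e))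
      = ∑ n ∈ Finset.range D, (A.coeff (n + 2) * (((n:ℂ) + 1 + 1) * z ^ (n + 1) * e) +
        (starRingEnd ℂ) (B.coeff (n + 2) * (((n:ℂ) + 1 + 1) * z ^ (n + 1) * e))) := by
    simp only [zero_pow (Nat.succ_ne_zero _), mul_zero, Finset.sum_const_zero, add_zero]
    rw [Finset.sum_add_distrib, ← map_sum]
    have : ∀ A : Polynomial ℂ, ∑ n ∈ Finset.range D, A.coeff (n + 2) * (((n:ℂ) + 1 + 1) * z ^ (n + 1) * e)
      = (∑ n ∈ Finset.range D, A.coeff (n + 2) * (((n:ℂ) + 1 + 1) * z ^ (n + 1))) * e := by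
      intro A; rw [Finset.sum_mul]; apply Finset.sum_congr rfl; intros; ring
    rw [this, this]
    simp only [add_mul, map_add]
    ring
  rw [e1]
  refine (norm_sum_le _ _).trans ?_
  refine le_trans ?_ (mul_le_mul_of_nonneg_left (geom_sum_bound h0 h1 D) (by positivity))
  rw [Finset.mul_sum]
  apply Finset.sum_le_sum
  intro n _
  refine (coeff_bound A B hN (by omega) _).trans ?_
  have : ‖((n:ℂ) + 1 + 1) * z ^ (n + 1) * e‖ ≤ ((n:ℝ) + 1 + 1) * r ^ (n + 1) := by
    rw [norm_mul, he, mul_one, norm_mul, norm_pow]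
    have : ‖(n:ℂ) + 1 + 1‖ = (n:ℝ) + 1 + 1 := by
      have : (n:ℂ) + 1 + 1 = ((n + 2 : ℕ) : ℂ) := by push_cast; ring
      rw [this, Complex.norm_natCast]; push_cast; ring
    rw [this]
    gcongr
  gcongr

lemma approx {f : ℂ → ℂ} (hfc : ContinuousOn f (closedBall (0:ℂ) 1)) {ε : ℝ} (hε : 0 < ε) :
    ∃ A B : Polynomial ℂ, ∀ z : ℂ, ‖z‖ = 1 → ‖f z - HH A.eval B.eval z‖ ≤ ε := by
  have hspan : ∀ P ∈ Submodule.span ℂ (Set.range (fourier (T := (1:ℝ)))),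
      ∃ A B : Polynomial ℂ, ∀ x, P x = HH A.eval B.eval ((AddCircle.toCircle x : Circle) : ℂ) := by
    intro P hP
    induction hP using Submodule.span_induction with
    | mem P h =>
      obtain ⟨n, rfl⟩ := h
      rcases le_total 0 n with hn | hn
      · obtain ⟨m, rfl⟩ := Int.eq_ofNat_of_zero_le hn
        refine ⟨Polynomial.X ^ m, 0, fun x => ?_⟩
        simp [HH, fourier_apply, AddCircle.toCircle_nsmul]
      · obtain ⟨m, hm⟩ := Int.eq_ofNat_of_zero_le (neg_nonneg.2 hn)
        obtain rfl : n = -(m:ℤ) := by omega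
        refine ⟨0, Polynomial.X ^ m, fun x => ?_⟩
        rw [fourier_neg]
        simp [HH, fourier_apply, AddCircle.toCircle_nsmul]
    | zero => exact ⟨0, 0, fun x => by simp [HH]⟩
    | add P Q _ _ hp hq =>
      obtain ⟨A, B, h⟩ := hp
      obtain ⟨A', B', h'⟩ := hq
      refine ⟨A + A', B + B', fun x => ?_⟩
      simp only [ContinuousMap.add_apply, h, h', HH, Polynomial.eval_add, map_add]
      ring
    | smul c P _ hp =>
      obtain ⟨A, B, h⟩ := hp
      refine ⟨Polynomial.C c * A, Polynomial.C ((starRingEnd ℂ) c) * B, fun x => ?_⟩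
      simp [h, HH]
      ring
  have hFc : Continuous fun x : AddCircle (1:ℝ) => f ((AddCircle.toCircle x : Circle) : ℂ) :=
    hfc.comp_continuous (by fun_prop) (fun x =>
      mem_closedBall_zero_iff.2 (Circle.norm_coe _).le)
  set F : C(AddCircle (1:ℝ), ℂ) := ⟨_, hFc⟩ with hF
  have hmem : F ∈ (Submodule.span ℂ (Set.range (fourier (T := (1:ℝ))))).topologicalClosure := by
    rw [span_fourier_closure_eq_top]; trivial
  obtain ⟨P, hP, hd⟩ := Metric.mem_closure_iff.1 hmem ε hε
  obtain ⟨A, B, h⟩ := hspan P hP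
  refine ⟨A, B, fun z hz => ?_⟩
  obtain ⟨x, hx⟩ := (AddCircle.homeomorphCircle (T := (1:ℝ)) one_ne_zero).surjective
    (⟨z, by simp [Submonoid.unitSphere, hz]⟩ : Circle)
  rw [AddCircle.homeomorphCircle_apply] at hx
  have hx' : ((AddCircle.toCircle x : Circle) : ℂ) = z := by rw [hx]
  have := (ContinuousMap.dist_apply_le_dist (f := F) (g := P) x).trans hd.le
  rw [dist_eq_norm, h x, hx'] at this
  simpa [hF, hx'] using this

lemma lap_sub {f h : ℂ → ℂ} (hf : ContDiffOn ℝ 2 f (ball (0:ℂ) 1))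
    (hh : ContDiffOn ℝ 2 h (ball (0:ℂ) 1)) {z : ℂ} (hz : z ∈ ball (0:ℂ) 1) :
    lap (fun w => f w - h w) z = lap f z - lap h z := by
  have hd : ∀ {f : ℂ → ℂ}, ContDiffOn ℝ 2 f (ball (0:ℂ) 1) → ∀ w ∈ ball (0:ℂ) 1,
      DifferentiableAt ℝ f w := fun h w hw =>
    (h.contDiffAt (isOpen_ball.mem_nhds hw)).differentiableAt (by norm_num)
  have hdd : ∀ {f : ℂ → ℂ}, ContDiffOn ℝ 2 f (ball (0:ℂ) 1) → ∀ d : ℂ,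
      DifferentiableAt ℝ (fun w => fderiv ℝ f w d) z := fun h d => by
    have h1 := ((h.contDiffAt (isOpen_ball.mem_nhds hz)).fderiv_right (m := 1)
      (by norm_num)).differentiableAt (by norm_num)
    exact h1.clm_apply (differentiableAt_const d)
  have ev : ∀ d : ℂ, (fun w => fderiv ℝ (fun w => f w - h w) w d) =ᶠ[nhds z]
      fun w => fderiv ℝ f w d - fderiv ℝ h w d := by
    intro d
    filter_upwards [isOpen_ball.mem_nhds hz] with w hw
    rw [fderiv_fun_sub (hd hf w hw) (hd hh w hw)]; rfl
  unfold lap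
  rw [(ev 1).fderiv_eq, (ev Complex.I).fderiv_eq, fderiv_fun_sub (hdd hf 1) (hdd hh 1),
    fderiv_fun_sub (hdd hf _) (hdd hh _)]
  simp only [sub_apply]
  ring

lemma le_of_eps {a b C : ℝ} (h : ∀ ε > 0, a ≤ b + C * ε) : a ≤ b := by
  by_contra! hab
  have hp : 0 < |C| + 1 := by positivity
  have h1 := h ((a - b) / (2 * (|C| + 1))) (div_pos (by linarith) (by positivity))
  have h2 : C * ((a - b) / (2 * (|C| + 1))) ≤ (a - b) / 2 := by
    rw [mul_div_assoc', div_le_div_iff₀ (by positivity) (by norm_num)]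
    nlinarith [le_abs_self C]
  linarith

lemma decomp {f : ℂ → ℂ} {M₁ M₂ : ℝ}
    (hf2 : ContDiffOn ℝ 2 f (ball (0:ℂ) 1))
    (hfc : ContinuousOn f (closedBall (0:ℂ) 1))
    (hfl : ∀ z ∈ ball (0:ℂ) 1, ‖lap f z‖ ≤ M₁)
    (hfb : ∀ z : ℂ, ‖z‖ = 1 → ‖f z‖ ≤ M₂) {ε : ℝ} (hε : 0 < ε) :
    ∃ (A B : Polynomial ℂ) (u : ℂ → ℂ), ContDiffOn ℝ 2 u (ball (0:ℂ) 1) ∧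
      ContinuousOn u (closedBall (0:ℂ) 1) ∧ (∀ z ∈ ball (0:ℂ) 1, ‖lap u z‖ ≤ M₁) ∧
      (∀ z : ℂ, ‖z‖ = 1 → ‖u z‖ ≤ ε) ∧
      (∀ w : ℂ, ‖w‖ = 1 → ‖HH A.eval B.eval w‖ ≤ M₂ + ε) ∧
      (∀ z ∈ ball (0:ℂ) 1, ∀ e, fderiv ℝ f z e = fderiv ℝ (HH A.eval B.eval) z e + fderiv ℝ u z e) := by
  obtain ⟨A, B, h⟩ := approx hfc hε
  have hA : DifferentiableOn ℂ A.eval (ball (0:ℂ) 1) := A.differentiable.differentiableOn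
  have hB : DifferentiableOn ℂ B.eval (ball (0:ℂ) 1) := B.differentiable.differentiableOn
  have hH := HH_contDiffOn hA hB
  have hHc : Continuous (HH A.eval B.eval) :=
    A.continuous.add (Complex.continuous_conj.comp B.continuous)
  refine ⟨A, B, fun w => f w - HH A.eval B.eval w, hf2.sub hH, hfc.sub hHc.continuousOn, ?_, h, ?_, ?_⟩
  · intro z hz
    rw [lap_sub hf2 hH hz, HH_lap hA hB hz, sub_zero]
    exact hfl z hz
  · intro w hw
    have h1 := norm_sub_le (f w) (f w - HH A.eval B.eval w)
    rw [sub_sub_cancel] at h1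
    linarith [h w hw, hfb w hw]
  · intro z hz e
    rw [fderiv_fun_sub ((hf2.contDiffAt (isOpen_ball.mem_nhds hz)).differentiableAt (by norm_num))
      ((hH.contDiffAt (isOpen_ball.mem_nhds hz)).differentiableAt (by norm_num))]
    simp

lemma f_grad {f : ℂ → ℂ} {M₁ M₂ : ℝ}
    (hf2 : ContDiffOn ℝ 2 f (ball (0:ℂ) 1))
    (hfc : ContinuousOn f (closedBall (0:ℂ) 1))
    (hfl : ∀ z ∈ ball (0:ℂ) 1, ‖lap f z‖ ≤ M₁)
    (hfb : ∀ z : ℂ, ‖z‖ = 1 → ‖f z‖ ≤ M₂) {z e : ℂ} (hz : ‖z‖ ≤ 1 / 2) (he : ‖e‖ = 1) :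
    ‖fderiv ℝ f z e‖ ≤ 4 * M₂ / Real.pi * (1 / (1 - ‖z‖ ^ 2)) + 2 / 3 * M₁ := by
  have hM0 : 0 ≤ M₁ := (norm_nonneg _).trans (hfl 0 (by simp))
  have hpi := Real.pi_gt_three
  have hpi0 := Real.pi_pos
  apply le_of_eps (C := 4 / Real.pi / (1 - ‖z‖ ^ 2) + 4 / Real.pi * (10 / 9 / (1 - ‖z‖)))
  intro ε hε
  obtain ⟨A, B, u, hu, huc, hul, hub, hN, hfd⟩ := decomp hf2 hfc hfl hfb hε
  have h1 := HH_grad A.differentiable B.differentiable hN (z := z) (by linarith) he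
  have h2 := grad_bound hu huc hul hub (z := z) (by linarith) he
  rw [hfd z (by rw [mem_ball_zero_iff]; linarith) e]
  have h3 : 4 / Real.pi * (M₁ * (5 / 18 * (1 + ‖z‖) + 3 / 40 * (1 - ‖z‖))) ≤ 2 / 3 * M₁ := by
    rw [div_mul_eq_mul_div, div_le_iff₀ hpi0]
    have : M₁ * (5 / 18 * (1 + ‖z‖) + 3 / 40 * (1 - ‖z‖)) ≤ M₁ * (1 / 2) :=
      mul_le_mul_of_nonneg_left (by linarith) hM0
    nlinarith
  refine (norm_add_le _ _).trans ?_
  refine (add_le_add h1 h2).trans ?_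
  have e1 : 4 / Real.pi * (M₂ + ε) / (1 - ‖z‖ ^ 2) =
    4 * M₂ / Real.pi * (1 / (1 - ‖z‖ ^ 2)) + 4 / Real.pi / (1 - ‖z‖ ^ 2) * ε := by ring
  have e2 : 4 / Real.pi * (10 / 9 * ε / (1 - ‖z‖) + M₁ * (5 / 18 * (1 + ‖z‖) + 3 / 40 * (1 - ‖z‖)))
    = 4 / Real.pi * (10 / 9 / (1 - ‖z‖)) * ε
      + 4 / Real.pi * (M₁ * (5 / 18 * (1 + ‖z‖) + 3 / 40 * (1 - ‖z‖))) := by ring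
  rw [e1, e2]
  linarith

lemma f_diff {f : ℂ → ℂ} {M₁ M₂ : ℝ}
    (hf2 : ContDiffOn ℝ 2 f (ball (0:ℂ) 1))
    (hfc : ContinuousOn f (closedBall (0:ℂ) 1))
    (hfl : ∀ z ∈ ball (0:ℂ) 1, ‖lap f z‖ ≤ M₁)
    (hfb : ∀ z : ℂ, ‖z‖ = 1 → ‖f z‖ ≤ M₂) {z e : ℂ} {r : ℝ} (hz : ‖z‖ ≤ r) (hr0 : 0 < r)
    (hr : r < 1 / 2) (he : ‖e‖ = 1) :
    ‖fderiv ℝ f z e - fderiv ℝ f 0 e‖ ≤ 4 * M₂ / Real.pi * (r * (2 - r) / (1 - r) ^ 2)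
      + 2 * M₁ * (Real.log (4 * (1 + r)) - Real.log r) * ((2 + r) * r) := by
  have hM0 : 0 ≤ M₁ := (norm_nonneg _).trans (hfl 0 (by simp))
  have hpi := Real.pi_gt_three
  have hpi0 := Real.pi_pos
  set H := r * (2 - r) / (1 - r) ^ 2 with hH
  apply le_of_eps (C := 4 / Real.pi * H + 8 * r * (4 / Real.pi * (10 / 9 / (1 / 2 - r))) / Real.pi)
  intro ε hε
  obtain ⟨A, B, u, hu, huc, hul, hub, hN, hfd⟩ := decomp hf2 hfc hfl hfb hε
  have h1 := HH_diff A B hN hz hr0.le (by linarith) he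
  have h2 := diff_bound hu huc hul hub hz hr0 hr he
  rw [hfd z (by rw [mem_ball_zero_iff]; linarith) e, hfd 0 (by simp) e, add_sub_add_comm]
  refine (norm_add_le _ _).trans ?_
  have h3 : ‖fderiv ℝ u z e - fderiv ℝ u 0 e‖ ≤
      8 * r * (4 / Real.pi * (10 / 9 / (1 / 2 - r))) / Real.pi * ε +
      r * M₁ * (8 / 3 * (1 / Real.pi) + 3 * (Real.log (1 / 2) - Real.log r)
        + 160 / 9 * (1 / Real.pi) ^ 2) := by
    have := (le_div_iff₀' hpi0).2 h2
    refine this.trans (le_of_eq ?_)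
    field_simp
    ring
  have hip : 1 / Real.pi ≤ 1 / 3 := one_div_le_one_div_of_le (by norm_num) hpi.le
  have hip0 : 0 ≤ 1 / Real.pi := by positivity
  have hip2 : (1 / Real.pi) ^ 2 ≤ 1 / 9 := by nlinarith
  have hlog2 := Real.log_two_gt_d9
  have hlhalf : Real.log (1 / 2) = - Real.log 2 := by rw [one_div, Real.log_inv]
  have hl4 : Real.log 4 = 2 * Real.log 2 := by
    rw [show (4:ℝ) = 2 ^ 2 by norm_num, Real.log_pow]; norm_num
  have hl41 : Real.log 4 ≤ Real.log (4 * (1 + r)) := Real.log_le_log (by norm_num) (by linarith)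
  have hlr : Real.log r ≤ 0 := Real.log_nonpos hr0.le (by linarith)
  have h4 : 8 / 3 * (1 / Real.pi) + 3 * (Real.log (1 / 2) - Real.log r)
        + 160 / 9 * (1 / Real.pi) ^ 2 ≤ 2 * (Real.log (4 * (1 + r)) - Real.log r) * (2 + r) := by
    have : 2 * (Real.log (4 * (1 + r)) - Real.log r) * 2 ≤
        2 * (Real.log (4 * (1 + r)) - Real.log r) * (2 + r) :=
      mul_le_mul_of_nonneg_left (by linarith) (by linarith)
    linarith
  have h5 := mul_le_mul_of_nonneg_left h4 (mul_nonneg hr0.le hM0)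
  have e1 : 4 / Real.pi * (M₂ + ε) * H = 4 * M₂ / Real.pi * H + 4 / Real.pi * H * ε := by ring
  rw [e1] at h1
  linarith

lemma f_zero {f : ℂ → ℂ} {M₁ M₂ : ℝ} (hM₂ : 0 < M₂)
    (hf2 : ContDiffOn ℝ 2 f (ball (0:ℂ) 1))
    (hfc : ContinuousOn f (closedBall (0:ℂ) 1))
    (hfl : ∀ z ∈ ball (0:ℂ) 1, ‖lap f z‖ ≤ M₁)
    (hfb : ∀ z : ℂ, ‖z‖ = 1 → ‖f z‖ ≤ M₂) {e : ℂ} (he : ‖e‖ = 1) :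
    ‖fderiv ℝ f 0 e‖ < 4 / Real.pi * M₂ + 2 / 3 * M₁ := by
  have hM0 : 0 ≤ M₁ := (norm_nonneg _).trans (hfl 0 (by simp))
  have hpi := Real.pi_gt_three
  have hpi0 := Real.pi_pos
  have h1 := zero_est hf2 hfc hfl he
  have hcont : Continuous fun t => f (EE e t) := hfc.comp_continuous (continuous_EE e)
    (fun t => mem_closedBall_zero_iff.2 (norm_EE he t).le)
  have h2 := cos_bound_strict hM₂ hcont (fun t => hfb _ (norm_EE he t))
  set I := ∫ t in (-Real.pi)..Real.pi, f (EE e t) * (Real.cos t : ℂ)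
  have h3 := norm_sub_norm_le ((Real.pi:ℂ) * fderiv ℝ f 0 e) I
  rw [norm_sub_rev, norm_mul, Complex.norm_real, Real.norm_eq_abs, abs_of_pos hpi0] at h3
  have h4 : Real.pi * ‖fderiv ℝ f 0 e‖ < Real.pi * (4 / Real.pi * M₂ + 2 / 3 * M₁) := by
    have : Real.pi * (4 / Real.pi * M₂ + 2 / 3 * M₁) = 4 * M₂ + 2 / 3 * M₁ * Real.pi := by
      field_simp
    rw [this]
    nlinarith
  exact lt_of_mul_lt_mul_left h4 hpi0.le

lemma exists_unit (a : ℂ) : ∃ α : ℂ, ‖α‖ = 1 ∧ a = ‖a‖ * α := by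
  by_cases h : a = 0
  · exact ⟨1, by simp, by simp [h]⟩
  · have : (‖a‖:ℂ) ≠ 0 := by simpa using h
    exact ⟨a / ‖a‖, by simp [h], by field_simp⟩

lemma attain (a b : ℂ) : ∃ e : ℂ, ‖e‖ = 1 ∧ ‖a * e + b * (starRingEnd ℂ) e‖ = ‖a‖ + ‖b‖ := by
  obtain ⟨α, hα, ha⟩ := exists_unit a
  obtain ⟨β, hβ, hb⟩ := exists_unit b
  have hα0 : α ≠ 0 := by intro h; simp [h] at hα
  obtain ⟨e, he⟩ := IsAlgClosed.exists_pow_nat_eq (β / α) (show 0 < 2 by norm_num)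
  have he1 : ‖e‖ = 1 := by
    have : ‖e‖ ^ 2 = 1 := by rw [← norm_pow, he, norm_div, hα, hβ, div_one]
    exact (pow_eq_one_iff_of_nonneg (norm_nonneg _) (by norm_num)).1 this
  have hee : e * (starRingEnd ℂ) e = 1 := by
    rw [Complex.mul_conj, Complex.normSq_eq_norm_sq, he1]; simp
  refine ⟨e, he1, ?_⟩
  have h1 : α * e = β * (starRingEnd ℂ) e := by
    have : α * e ^ 2 = β := by rw [he]; field_simp
    rw [← this]
    linear_combination (-α * e) * hee
  have h2 : a * e + b * (starRingEnd ℂ) e = ((‖a‖ + ‖b‖ : ℝ) : ℂ) * (β * (starRingEnd ℂ) e) := by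
    push_cast
    conv_lhs => rw [ha, hb]
    linear_combination (‖a‖ : ℂ) * h1
  rw [h2, norm_mul, norm_mul, RCLike.norm_conj, hβ, he1, Complex.norm_real, Real.norm_eq_abs,
    abs_of_nonneg (by positivity)]
  ring

lemma fderiv_wd (f : ℂ → ℂ) (z x : ℂ) :
    fderiv ℝ f z x = wdz f z * x + wdzbar f z * (starRingEnd ℂ) x := by
  have h : fderiv ℝ f z x = x.re * fderiv ℝ f z 1 + x.im * fderiv ℝ f z Complex.I := by
    conv_lhs => rw [← Complex.re_add_im x]
    have e1 : (x.re : ℂ) = x.re • (1:ℂ) := by simp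
    have e2 : (x.im : ℂ) * Complex.I = x.im • Complex.I := by simp
    rw [e1, e2, map_add, map_smul, map_smul]
    simp
  rw [h]
  unfold wdz wdzbar
  have hx : (starRingEnd ℂ) x = x.re - x.im * Complex.I := by
    apply Complex.ext <;> simp
  rw [hx]
  conv_rhs => rw [← Complex.re_add_im x]
  simp only [Complex.add_re, Complex.ofReal_re, Complex.mul_re, Complex.I_re, Complex.I_im,
    Complex.ofReal_im, Complex.add_im, Complex.mul_im]
  push_cast
  linear_combination ((x.im : ℂ) * fderiv ℝ f z Complex.I) * Complex.I_mul_I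

/-- Corollary 1.11: `f` is bi-Lipschitz on `𝔻_{r₀}`. -/
theorem stmt16 (M₁ M₂ : ℝ) (hM₁ : 0 ≤ M₁) (hM₂ : 0 < M₂) (g f : ℂ → ℂ)
    (hg : ContinuousOn g (closedBall (0:ℂ) 1))
    (hf2 : ContDiffOn ℝ 2 f (ball (0:ℂ) 1))
    (hfc : ContinuousOn f (closedBall (0:ℂ) 1))
    (hfg : ∀ z ∈ ball (0:ℂ) 1, lap f z = g z)
    (hf0 : f 0 = 0)
    (hJ : ‖wdz f 0‖ ^ 2 - ‖wdzbar f 0‖ ^ 2 = 1)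
    (hgb : ∀ z ∈ ball (0:ℂ) 1, ‖g z‖ ≤ M₁)
    (hfb : ∀ z ∈ ball (0:ℂ) 1, ‖f z‖ ≤ M₂)
    (r₀ : ℝ) (hr₀ : r₀ ∈ Set.Ioo (0:ℝ) 1)
    (heq : 1 / (4 / Real.pi * M₂ + 2 / 3 * M₁) -
        4 * M₂ / Real.pi * (r₀ * (2 - r₀) / (1 - r₀) ^ 2) -
        2 * M₁ * (Real.log (4 * (1 + r₀)) - Real.log r₀) * ((2 + r₀) * r₀) = 0) :
    ∃ L₁ : ℝ, 0 < L₁ ∧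
      ∀ z₁ ∈ ball (0:ℂ) r₀, ∀ z₂ ∈ ball (0:ℂ) r₀,
        L₁ * ‖z₁ - z₂‖ ≤ ‖f z₁ - f z₂‖ ∧
        ‖f z₁ - f z₂‖ ≤ (4 * M₂ / Real.pi * (1 / (1 - r₀ ^ 2)) + 2 / 3 * M₁) * ‖z₁ - z₂‖ := by
  obtain ⟨hr0, hr1⟩ := hr₀
  have hpi0 := Real.pi_pos
  have hfl : ∀ z ∈ ball (0:ℂ) 1, ‖lap f z‖ ≤ M₁ := fun z hz => by rw [hfg z hz]; exact hgb z hz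
  have hfs : ∀ z : ℂ, ‖z‖ = 1 → ‖f z‖ ≤ M₂ := by
    intro z hz
    have hcl : closure (ball (0:ℂ) 1) = closedBall 0 1 := closure_ball _ one_ne_zero
    exact le_on_closure (f := fun z => ‖f z‖) (g := fun _ => M₂) hfb
      (by rw [hcl]; exact hfc.norm) continuousOn_const
      (by rw [hcl, mem_closedBall_zero_iff, hz])
  set a := wdz f 0
  set b := wdzbar f 0
  set A := 4 / Real.pi * M₂ + 2 / 3 * M₁ with hA
  have hb0 := norm_nonneg b
  have ha0 := norm_nonneg a
  have ha1 : 1 ≤ ‖a‖ := by nlinarith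
  have hΛ : ‖a‖ + ‖b‖ < A := by
    obtain ⟨e, he, hee⟩ := attain a b
    rw [← hee, ← fderiv_wd]
    exact f_zero hM₂ hf2 hfc hfl hfs he
  have hA1 : 1 < A := by linarith
  have hl : 1 / A < ‖a‖ - ‖b‖ := by
    have h1 : (‖a‖ - ‖b‖) * (‖a‖ + ‖b‖) = 1 := by linarith
    have h2 : 0 < ‖a‖ - ‖b‖ := by nlinarith
    rw [div_lt_iff₀ (by linarith)]
    nlinarith
  have hhalf : r₀ < 1 / 2 := by
    by_contra! hge
    have hH : 3 ≤ r₀ * (2 - r₀) / (1 - r₀) ^ 2 := by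
      have : 0 < 1 - r₀ := by linarith
      rw [le_div_iff₀ (by positivity)]
      nlinarith
    have hl4 : Real.log 4 = 2 * Real.log 2 := by
      rw [show (4:ℝ) = 2 ^ 2 by norm_num, Real.log_pow]; norm_num
    have hlog2 := Real.log_two_gt_d9
    have hl41 : Real.log 4 ≤ Real.log (4 * (1 + r₀)) := Real.log_le_log (by norm_num) (by linarith)
    have hlr : Real.log r₀ ≤ 0 := Real.log_nonpos hr0.le hr1.le
    have h1 : 1 ≤ (Real.log (4 * (1 + r₀)) - Real.log r₀) * ((2 + r₀) * r₀) := by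
      have h2 : 1 ≤ (2 + r₀) * r₀ := by nlinarith
      have h3 : 1 ≤ Real.log (4 * (1 + r₀)) - Real.log r₀ := by linarith
      nlinarith
    have h2 := mul_le_mul_of_nonneg_left h1 (show 0 ≤ 2 * M₁ by linarith)
    have h3 := mul_le_mul_of_nonneg_left hH (show 0 ≤ 4 * M₂ / Real.pi by positivity)
    have h4 : 1 / A < 1 := by rw [div_lt_one (by linarith)]; exact hA1
    have h5 : 0 < 4 * M₂ / Real.pi := by positivity
    have h6 : A = 4 * M₂ / Real.pi + 2 / 3 * M₁ := by rw [hA]; ring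
    linarith
  have hfd : ∀ x ∈ ball (0:ℂ) r₀, DifferentiableAt ℝ f x := fun x hx =>
    (hf2.contDiffAt (isOpen_ball.mem_nhds (ball_subset_ball hr1.le hx))).differentiableAt
      (by norm_num)
  have hup : ∀ x ∈ ball (0:ℂ) r₀, ‖fderiv ℝ f x‖ ≤
      4 * M₂ / Real.pi * (1 / (1 - r₀ ^ 2)) + 2 / 3 * M₁ := by
    intro x hx
    rw [mem_ball_zero_iff] at hx
    have hp : 0 < 1 - r₀ ^ 2 := by nlinarith
    refine ContinuousLinearMap.opNorm_le_of_unit_norm (by positivity) fun e he => ?_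
    refine (f_grad hf2 hfc hfl hfs (by linarith) he).trans ?_
    have : 1 / (1 - ‖x‖ ^ 2) ≤ 1 / (1 - r₀ ^ 2) := by
      apply one_div_le_one_div_of_le hp
      nlinarith [norm_nonneg x]
    gcongr
  have hlow : ∀ x ∈ ball (0:ℂ) r₀, ‖fderiv ℝ f x - fderiv ℝ f 0‖ ≤ 1 / A := by
    intro x hx
    rw [mem_ball_zero_iff] at hx
    refine ContinuousLinearMap.opNorm_le_of_unit_norm (by positivity) fun e he => ?_
    have := f_diff hf2 hfc hfl hfs hx.le hr0 hhalf he
    rw [sub_apply]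
    linarith
  refine ⟨‖a‖ - ‖b‖ - 1 / A, by linarith, fun z₁ h₁ z₂ h₂ => ⟨?_, ?_⟩⟩
  · have h1 := (convex_ball (0:ℂ) r₀).norm_image_sub_le_of_norm_fderiv_le' (𝕜 := ℝ) hfd hlow h₂ h₁
    have h2 : (‖a‖ - ‖b‖) * ‖z₁ - z₂‖ ≤ ‖fderiv ℝ f 0 (z₁ - z₂)‖ := by
      rw [fderiv_wd]
      have := norm_sub_norm_le (a * (z₁ - z₂)) (-(b * (starRingEnd ℂ) (z₁ - z₂)))
      rw [sub_neg_eq_add, norm_neg, norm_mul, norm_mul, RCLike.norm_conj] at this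
      linarith
    have h3 := norm_sub_norm_le (fderiv ℝ f 0 (z₁ - z₂)) (f z₁ - f z₂)
    rw [norm_sub_rev (fderiv ℝ f 0 (z₁ - z₂)) (f z₁ - f z₂)] at h3
    linarith
  · exact (convex_ball (0:ℂ) r₀).norm_image_sub_le_of_norm_fderiv_le (𝕜 := ℝ) hfd hup h₂ h₁
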